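/- arXiv:2206.05208 — 2 statements merged into one kernel-verified Lean document; each statement's English description precedes it below -/
import Mathlib

section
/- For every tiling recognizable picture language R ⊆ Σ^{++} there exist k ≥ 2, a finite alphabet Λ with |Λ| = 2 + 2·|Σ|, a 2k-SLT picture language L ⊆ Λ^{++}, and a projection ρ : Λ → Σ ∪ {$} such that the padded language R^(k) satisfies R^(k) = ρ(L). Moreover there is an absolute constant c such that, if R is recognized by a tiling system with a local alphabet of size n ≥ 2, then k can be chosen with k ≤ c·log₂ n. -/
/-- A picture over alphabet `A`: a rectangular array with at least one row
and one column. -/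
structure Picture (A : Type) : Type where
  rows : ℕ
  cols : ℕ
  rows_pos : 0 < rows
  cols_pos : 0 < cols
  pix : Fin rows → Fin cols → A

namespace Picture

/-- Pixelwise projection of a picture along a map of alphabets. -/
def map {A B : Type} (f : A → B) (p : Picture A) : Picture B :=
  ⟨p.rows, p.cols, p.rows_pos, p.cols_pos, fun i j => f (p.pix i j)⟩

/-- The pixel at (i,j) (0-based), or `none` if out of range. -/
def pget {A : Type} (p : Picture A) (i j : ℕ) : Option A :=
  if h : i < p.rows ∧ j < p.cols then some (p.pix ⟨i, h.1⟩ ⟨j, h.2⟩) else none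

/-- The pixel at position (i,j) of the bordered picture of `p`, where the
border symbol `#` is `none`; row 0 and column 0 are border rows, the content
occupies rows `1..p.rows` and columns `1..p.cols`, and every other position
is a border (`#`) position. -/
def bpix {A : Type} (p : Picture A) (i j : ℕ) : Option A :=
  if h : 1 ≤ i ∧ i ≤ p.rows ∧ 1 ≤ j ∧ j ≤ p.cols then
    some (p.pix ⟨i - 1, by omega⟩ ⟨j - 1, by omega⟩)
  else none

end Picture

/-- A `k`-tile over `A ∪ {#}`, the border symbol `#` being `none`. -/
abbrev BTile (A : Type) (k : ℕ) := Fin k → Fin k → Option A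

/-- Number of rows of the bordered version of `p` used for `k`-tiles:
one border row on top and at least one at the bottom, with as many extra
border rows at the bottom as needed for `k × k` subpictures to exist. -/
def borderRows {A : Type} (p : Picture A) (k : ℕ) : ℕ := max (p.rows + 2) k

/-- Number of columns of the bordered version of `p` used for `k`-tiles. -/
def borderCols {A : Type} (p : Picture A) (k : ℕ) : ℕ := max (p.cols + 2) k

/-- The set of `k`-tiles of the bordered picture of `p`. -/
def tilesOf {A : Type} (k : ℕ) (p : Picture A) : Set (BTile A k) :=
  { t | ∃ i j : ℕ, i + k ≤ borderRows p k ∧ j + k ≤ borderCols p k ∧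
      ∀ a b : Fin k, t a b = p.bpix (i + (a : ℕ)) (j + (b : ℕ)) }

/-- The `k`-strictly-locally-testable language defined by the tile set `T`:
all pictures each of whose `k`-tiles (of the bordered picture) is in `T`. -/
def SLTLang {A : Type} (k : ℕ) (T : Set (BTile A k)) : Set (Picture A) :=
  { p | tilesOf k p ⊆ T }

/-- The padded language `R^(k)` over `Σ ∪ {$}` (the padding symbol `$`
being `none`): each picture of `R` is extended with between 1 and `k`
columns of `$` on the right and between 1 and `k` rows of `$` at the
bottom, so that both sides of the result are multiples of `k`. -/
def padded {Sig : Type} (k : ℕ) (R : Set (Picture Sig)) :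
    Set (Picture (Option Sig)) :=
  { q | ∃ p ∈ R,
      p.rows < q.rows ∧ q.rows ≤ p.rows + k ∧
      p.cols < q.cols ∧ q.cols ≤ p.cols + k ∧
      k ∣ q.rows ∧ k ∣ q.cols ∧
      ∀ i j : ℕ, i < q.rows → j < q.cols → q.pget i j = some (p.pget i j) }

/-- A picture language is tiling recognizable (is in REC) if it is the
projection of a local (2-SLT) language over some finite local alphabet. -/
def TilingRecognizable {Sig : Type} (R : Set (Picture Sig)) : Prop :=
  ∃ (Gam : Type) (_ : Fintype Gam) (T : Set (BTile Gam 2)) (π : Gam → Sig),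
    R = Picture.map π '' SLTLang 2 T

/-- The padded language `R^(k)` is the projection, under some
`ρ : Λ → Σ ∪ {$}` with `|Λ| = 2 + 2·|Σ|`, of a `2k`-SLT language over
`Λ`. -/
def PaddedEMT (Sig : Type) [Fintype Sig] (R : Set (Picture Sig)) (k : ℕ) : Prop :=
  ∃ (Lam : Type) (_ : Fintype Lam),
    Fintype.card Lam = 2 + 2 * Fintype.card Sig ∧
    ∃ (T' : Set (BTile Lam (2 * k))) (ρ : Lam → Option Sig),
      padded k R = Picture.map ρ '' SLTLang (2 * k) T'

section Aux

variable {A B C : Type}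

theorem bpix_some {p : Picture A} {i j : ℕ} (h : 1 ≤ i ∧ i ≤ p.rows ∧ 1 ≤ j ∧ j ≤ p.cols) :
    p.bpix i j = some (p.pix ⟨i - 1, by omega⟩ ⟨j - 1, by omega⟩) := by
  simp [Picture.bpix, h]

theorem bpix_isSome (p : Picture A) (i j : ℕ) :
    (p.bpix i j).isSome ↔ (1 ≤ i ∧ i ≤ p.rows ∧ 1 ≤ j ∧ j ≤ p.cols) := by
  unfold Picture.bpix
  split_ifs with h <;> simp [h]

theorem bpix_none_iff (p : Picture A) (i j : ℕ) :
    p.bpix i j = none ↔ ¬ (1 ≤ i ∧ i ≤ p.rows ∧ 1 ≤ j ∧ j ≤ p.cols) := by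
  rw [← bpix_isSome]; simp

theorem bpix_succ (p : Picture A) (i j : ℕ) : p.bpix (i+1) (j+1) = p.pget i j := by
  unfold Picture.bpix Picture.pget
  by_cases h : i < p.rows ∧ j < p.cols
  · have h' : 1 ≤ i+1 ∧ i+1 ≤ p.rows ∧ 1 ≤ j+1 ∧ j+1 ≤ p.cols := by omega
    rw [dif_pos h, dif_pos h']
    rfl
  · have h' : ¬ (1 ≤ i+1 ∧ i+1 ≤ p.rows ∧ 1 ≤ j+1 ∧ j+1 ≤ p.cols) := by omega
    rw [dif_neg h, dif_neg h']

theorem pic_ext {p q : Picture A} (hr : p.rows = q.rows) (hc : p.cols = q.cols)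
    (h : ∀ i j, i < p.rows → j < p.cols → p.pget i j = q.pget i j) : p = q := by
  obtain ⟨m, n, hm, hn, f⟩ := p
  obtain ⟨m', n', hm', hn', f'⟩ := q
  simp only at hr hc
  subst hr hc
  congr
  funext i j
  have := h i j i.2 j.2
  simpa [Picture.pget] using this

/-- Two windows of size `K` agree. -/
def Agree (K : ℕ) (x : Picture A) (i j : ℕ) (g : Picture A) (i2 j2 : ℕ) : Prop :=
  ∀ a < K, ∀ b < K, x.bpix (i + a) (j + b) = g.bpix (i2 + a) (j2 + b)

/-- Valid window position. -/
def Vld (K : ℕ) (x : Picture A) (i j : ℕ) : Prop :=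
  i + K ≤ borderRows x K ∧ j + K ≤ borderCols x K

/-- Pictures all of whose `K`-windows occur in members of `S`. -/
def Loc (K : ℕ) (S : Set (Picture A)) : Set (Picture A) :=
  { x | ∀ i j, Vld K x i j → ∃ g ∈ S, ∃ i' j', Vld K g i' j' ∧ Agree K x i j g i' j' }

theorem Loc_eq_SLT (K : ℕ) (S : Set (Picture A)) :
    Loc K S = SLTLang K { t | ∃ g ∈ S, t ∈ tilesOf K g } := by
  ext x
  constructor
  · rintro hx t ⟨i, j, hi, hj, ht⟩
    obtain ⟨g, hg, i', j', hv, ha⟩ := hx i j ⟨hi, hj⟩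
    exact ⟨g, hg, i', j', hv.1, hv.2, fun a b => by rw [ht, ha a a.2 b b.2]⟩
  · intro hx i j hv
    obtain ⟨g, hg, i', j', hi, hj, ha⟩ := hx ⟨i, j, hv.1, hv.2, fun a b => rfl⟩
    exact ⟨g, hg, i', j', ⟨hi, hj⟩, fun a ha' b hb' => ha ⟨a, ha'⟩ ⟨b, hb'⟩⟩

theorem Loc_SLT (K : ℕ) (T : Set (BTile A K)) : Loc K (SLTLang K T) ⊆ SLTLang K T := by
  rintro x hx t ⟨i, j, hi, hj, ht⟩
  obtain ⟨g, hg, i', j', hv, ha⟩ := hx i j ⟨hi, hj⟩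
  exact hg ⟨i', j', hv.1, hv.2, fun a b => by rw [ht, ha a a.2 b b.2]⟩

theorem Loc_Loc (K : ℕ) (S : Set (Picture A)) : Loc K (Loc K S) ⊆ Loc K S := by
  rw [Loc_eq_SLT K S]; exact Loc_SLT K _

theorem subset_Loc (K : ℕ) (S : Set (Picture A)) : S ⊆ Loc K S :=
  fun x hx i j hv => ⟨x, hx, i, j, hv, fun _ _ _ _ => rfl⟩

/-- block index (1-based) of bordered coordinate `r`. -/
def blk (k r : ℕ) : ℕ := (r + k - 1) / k
/-- offset in block of bordered coordinate `r`. -/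
def off (k r : ℕ) : ℕ := (r + k - 1) % k

theorem off_lt {k : ℕ} (hk : 0 < k) (r : ℕ) : off k r < k := Nat.mod_lt _ hk

theorem blk_off {k : ℕ} (hk : 0 < k) (r : ℕ) : r + k = blk k r * k + off k r + 1 := by
  have := Nat.div_add_mod' (r + k - 1) k
  unfold blk off; omega

theorem blk_off_uniq {k r I u : ℕ} (hu : u < k) (h : r + k = I * k + u + 1) :
    blk k r = I ∧ off k r = u := by
  have h1 : r + k - 1 = u + k * I := by rw [mul_comm k I]; omega
  unfold blk off
  rw [h1]
  constructor
  · rw [Nat.add_mul_div_left _ _ (by omega), Nat.div_eq_of_lt hu]; omega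
  · rw [Nat.add_mul_mod_self_left, Nat.mod_eq_of_lt hu]

theorem blk_add_mul {k : ℕ} (hk : 0 < k) (r s : ℕ) :
    blk k (r + s * k) = blk k r + s ∧ off k (r + s * k) = off k r := by
  apply blk_off_uniq (off_lt hk r)
  have := blk_off hk r
  rw [add_mul]; omega

theorem blk_pos {k : ℕ} (hk : 0 < k) (r : ℕ) : 1 ≤ blk k r ↔ 1 ≤ r := by
  have := blk_off hk r
  have := off_lt hk r
  constructor
  · intro h
    have : 1 * k ≤ blk k r * k := Nat.mul_le_mul_right _ h
    omega
  · intro h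
    by_contra h'
    have h0 : blk k r = 0 := by omega
    have h3 : blk k r * k = 0 := by rw [h0, zero_mul]
    omega

theorem blk_le {k : ℕ} (hk : 0 < k) (r a : ℕ) : blk k r ≤ a ↔ r ≤ a * k := by
  have := blk_off hk r
  have := off_lt hk r
  constructor
  · intro h
    have : blk k r * k ≤ a * k := Nat.mul_le_mul_right _ h
    omega
  · intro h
    by_contra h'
    have : (a + 1) * k ≤ blk k r * k := Nat.mul_le_mul_right _ (by omega)
    rw [add_mul] at this
    omega

theorem blk_sub {k : ℕ} (hk : 0 < k) (r : ℕ) (hr : 1 ≤ r) :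
    blk k r - 1 = (r - 1) / k ∧ off k r = (r - 1) % k := by
  have h1 := Nat.div_add_mod' (r - 1) k
  have h2 : r + k = ((r - 1) / k + 1) * k + (r - 1) % k + 1 := by rw [add_mul]; omega
  obtain ⟨h3, h4⟩ := blk_off_uniq (Nat.mod_lt _ hk) h2
  exact ⟨by rw [h3]; rfl, h4⟩

theorem cong_ex {k : ℕ} (hk : 0 < k) {i i' : ℕ} (h : off k i = off k i') :
    ∃ s t, i + s * k = i' + t * k := by
  have h1 := blk_off hk i
  have h2 := blk_off hk i'
  exact ⟨blk k i', blk k i, by omega⟩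

theorem cong_shift {k : ℕ} (hk : 0 < k) {i i' : ℕ} (h : off k i = off k i') :
    ∃ s t, ∀ a, blk k (i + a) + s = blk k (i' + a) + t ∧ off k (i + a) = off k (i' + a) := by
  obtain ⟨s, t, hst⟩ := cong_ex hk h
  refine ⟨s, t, fun a => ?_⟩
  have h1 := blk_add_mul hk (i + a) s
  have h2 := blk_add_mul hk (i' + a) t
  have : i + a + s * k = i' + a + t * k := by omega
  rw [this] at h1
  exact ⟨by rw [← h1.1, h2.1], by rw [← h1.2, h2.2]⟩

theorem cong_cancel {k : ℕ} (hk : 0 < k) {i i' a : ℕ} (h : off k (i + a) = off k (i' + a)) :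
    off k i = off k i' := by
  obtain ⟨s, t, hst⟩ := cong_ex hk h
  have h1 := blk_add_mul hk i s
  have h2 := blk_add_mul hk i' t
  have : i + s * k = i' + t * k := by omega
  rw [← h1.2, ← h2.2, this]

/-- Every residue is attained among `k` consecutive positions. -/
theorem exists_res {k : ℕ} (hk : 0 < k) (r u : ℕ) (hu : u < k) : ∃ a < k, off k (r + a) = u := by
  have h := blk_off hk r
  have h' := off_lt hk r
  rcases le_or_gt (off k r) u with h1 | h1
  · refine ⟨u - off k r, by omega, (blk_off_uniq (I := blk k r) hu ?_).2⟩
    omega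
  · refine ⟨u + k - off k r, by omega, (blk_off_uniq (I := blk k r + 1) hu ?_).2⟩
    rw [add_mul]; omega

/-- Blow-up of a picture of blocks. -/
def blow (k : ℕ) (hk : 0 < k) (enc : B → ℕ → ℕ → C) (y : Picture B) : Picture C :=
  ⟨y.rows * k, y.cols * k, Nat.mul_pos y.rows_pos hk, Nat.mul_pos y.cols_pos hk,
    fun i j => enc (y.pix ⟨i / k, Nat.div_lt_of_lt_mul (i.2.trans_eq (mul_comm _ _))⟩
      ⟨j / k, Nat.div_lt_of_lt_mul (j.2.trans_eq (mul_comm _ _))⟩) (i % k) (j % k)⟩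

theorem blow_bpix (k : ℕ) (hk : 0 < k) (enc : B → ℕ → ℕ → C) (y : Picture B) (r c : ℕ) :
    (blow k hk enc y).bpix r c =
      (y.bpix (blk k r) (blk k c)).map (fun b => enc b (off k r) (off k c)) := by
  by_cases h : 1 ≤ r ∧ r ≤ y.rows * k ∧ 1 ≤ c ∧ c ≤ y.cols * k
  · have h' : 1 ≤ blk k r ∧ blk k r ≤ y.rows ∧ 1 ≤ blk k c ∧ blk k c ≤ y.cols := by
      rw [blk_pos hk, blk_pos hk, blk_le hk, blk_le hk]; exact h
    rw [bpix_some h', bpix_some (p := blow k hk enc y) h]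
    obtain ⟨h1, h2⟩ := blk_sub hk r h.1
    obtain ⟨h3, h4⟩ := blk_sub hk c h.2.2.1
    simp only [Option.map_some, blow, h1, h2, h3, h4]
  · have h' : ¬ (1 ≤ blk k r ∧ blk k r ≤ y.rows ∧ 1 ≤ blk k c ∧ blk k c ≤ y.cols) := by
      rw [blk_pos hk, blk_pos hk, blk_le hk, blk_le hk]; exact h
    rw [(bpix_none_iff _ _ _).2 h', (bpix_none_iff (blow k hk enc y) _ _).2 h]
    rfl

/-- `k` consecutive content coordinates inside a shifted `2k`-window. -/
theorem win_content {k b j β : ℕ} (hk : 2 ≤ k) (hb : 0 < b) (hj : j + 2 * k ≤ max (b * k + 2) (2 * k))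
    (hβ : β ≤ 1) : ∃ b0, b0 + k + β ≤ 2 * k ∧ 1 ≤ j + β + b0 ∧ j + β + b0 + k ≤ b * k + 1 := by
  have h1 : 1 * k ≤ b * k := Nat.mul_le_mul_right _ hb
  rcases Nat.eq_zero_or_pos j with h | h
  · exact ⟨1 - β, by omega, by omega, by omega⟩
  · exact ⟨0, by omega, by omega, by omega⟩

/-- Choice of a `2k`-window showing the block pair `I, I+1`. -/
theorem win_block {k a I : ℕ} (hk : 3 ≤ k) (ha : 0 < a) (hI : I ≤ a) :
    ∃ i u0 u1, i + 2 * k ≤ max (a * k + 2) (2 * k) ∧ u0 < 2 * k ∧ u1 < 2 * k ∧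
      blk k (i + u0) = I ∧ blk k (i + u1) = I + 1 ∧
      (1 ≤ I → u0 + k ≤ 2 * k ∧ off k (i + u0) = 0) ∧
      (I + 1 ≤ a → u1 + k ≤ 2 * k ∧ off k (i + u1) = 0) := by
  rcases Nat.eq_zero_or_pos I with rfl | hI0
  · have h0 := blk_off_uniq (k := k) (r := 0) (I := 0) (u := k - 1) (by omega) (by omega)
    have h1 := blk_off_uniq (k := k) (r := 1) (I := 1) (u := 0) (by omega) (by omega)
    exact ⟨0, 0, 1, by omega, by omega, by omega, by simpa using h0.1, by simpa using h1.1,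
      by omega, fun _ => ⟨by omega, by simpa using h1.2⟩⟩
  · obtain ⟨J, rfl⟩ : ∃ J, I = J + 1 := ⟨I - 1, by omega⟩
    rcases Nat.lt_or_ge (J + 1) a with h | h
    · have h2 : (J + 2) * k ≤ a * k := Nat.mul_le_mul_right _ (by omega)
      have h0 := blk_off_uniq (k := k) (r := J * k + 1) (I := J + 1) (u := 0) (by omega)
        (by ring)
      have h1 := blk_off_uniq (k := k) (r := J * k + 1 + k) (I := J + 1 + 1) (u := 0) (by omega)
        (by ring)
      rw [add_mul] at h2
      exact ⟨J * k + 1, 0, k, by omega, by omega, by omega, h0.1, h1.1,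
        fun _ => ⟨by omega, h0.2⟩, fun _ => ⟨by omega, h1.2⟩⟩
    · have : a = J + 1 := by omega
      subst this
      rcases Nat.eq_zero_or_pos J with rfl | hJ
      · have h0 := blk_off_uniq (k := k) (r := 0 + 1) (I := 1) (u := 0) (by omega) (by omega)
        have h1 := blk_off_uniq (k := k) (r := 0 + (k + 1)) (I := 2) (u := 0) (by omega) (by omega)
        exact ⟨0, 1, k + 1, by omega, by omega, by omega, h0.1, h1.1,
          fun _ => ⟨by omega, h0.2⟩, by omega⟩
      · obtain ⟨H, rfl⟩ : ∃ H, J = H + 1 := ⟨J - 1, by omega⟩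
        have h0 := blk_off_uniq (k := k) (r := H * k + 2 + (k - 1)) (I := H + 1 + 1) (u := 0)
          (by omega) (by simp only [add_mul]; omega)
        have h1 := blk_off_uniq (k := k) (r := H * k + 2 + (2 * k - 1)) (I := H + 1 + 1 + 1) (u := 0)
          (by omega) (by simp only [add_mul]; omega)
        refine ⟨H * k + 2, k - 1, 2 * k - 1, by simp only [add_mul]; omega, by omega, by omega,
          h0.1, h1.1, fun _ => ⟨by omega, h0.2⟩, by omega⟩

/-- Agreement of 2-windows in presence of content forces agreement of border positions. -/
theorem agree2 {x g : Picture A} {i j i' j' : ℕ} (h : Agree 2 x i j g i' j')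
    (_hv : Vld 2 x i j) (hv' : Vld 2 g i' j') :
    ((i = 0 ↔ i' = 0) ∧ (i = x.rows ↔ i' = g.rows)) ∧
    ((j = 0 ↔ j' = 0) ∧ (j = x.cols ↔ j' = g.cols)) := by
  have hh : ∀ a < 2, ∀ b < 2, (1 ≤ i + a ∧ i + a ≤ x.rows ∧ 1 ≤ j + b ∧ j + b ≤ x.cols) ↔
      (1 ≤ i' + a ∧ i' + a ≤ g.rows ∧ 1 ≤ j' + b ∧ j' + b ≤ g.cols) := by
    intro a ha b hb
    rw [← bpix_isSome, ← bpix_isSome, h a ha b hb]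
  have h00 := hh 0 (by omega) 0 (by omega)
  have h01 := hh 0 (by omega) 1 (by omega)
  have h10 := hh 1 (by omega) 0 (by omega)
  have h11 := hh 1 (by omega) 1 (by omega)
  have := x.rows_pos
  have := x.cols_pos
  have := g.rows_pos
  have := g.cols_pos
  simp only [Vld, borderRows, borderCols] at _hv hv'
  omega

end Aux
section Step1

variable {B C : Type}

theorem sync_step {k : ℕ} (hk : 3 ≤ k) (hk0 : 0 < k) (enc : B → ℕ → ℕ → C) (bit : C → Bool)
    (h0 : ∀ b v, v < k → bit (enc b 0 v) = true)
    (h1 : ∀ b u, 0 < u → u < k → bit (enc b u (k - 1)) = false)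
    (h2 : ∀ b v, v < k - 1 → bit (enc b 1 v) = true)
    {y1 y2 : Picture B} {i1 j1 i2 j2 α β : ℕ} (hα : α ≤ 1) (hβ : β ≤ 1)
    (hv : Vld (2 * k) (blow k hk0 enc y1) i1 j1)
    (hag : ∀ a b, a + α < 2 * k → b + β < 2 * k →
      (blow k hk0 enc y1).bpix (i1 + α + a) (j1 + β + b) =
      (blow k hk0 enc y2).bpix (i2 + a) (j2 + b)) :
    off k (i1 + α) = off k i2 ∧ off k (j1 + β) = off k j2 := by
  obtain ⟨a0, ha1, ha2, ha3⟩ := win_content (by omega) y1.rows_pos hv.1 hα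
  obtain ⟨b0, hb1, hb2, hb3⟩ := win_content (by omega) y1.cols_pos hv.2 hβ
  have H : ∀ a < k, ∀ b < k, ∃ e1 e2,
      enc e1 (off k (i1 + α + a0 + a)) (off k (j1 + β + b0 + b)) =
      enc e2 (off k (i2 + a0 + a)) (off k (j2 + b0 + b)) := by
    intro a ha b hb
    have h := hag (a0 + a) (b0 + b) (by omega) (by omega)
    have hs : ((blow k hk0 enc y1).bpix (i1 + α + (a0 + a)) (j1 + β + (b0 + b))).isSome := by
      rw [bpix_isSome]
      refine ⟨by omega, ?_, by omega, ?_⟩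
      · show _ ≤ y1.rows * k
        omega
      · show _ ≤ y1.cols * k
        omega
    have hs2 := hs
    rw [h] at hs2
    rw [blow_bpix] at hs hs2
    rw [blow_bpix, blow_bpix] at h
    rw [Option.isSome_map] at hs hs2
    obtain ⟨e1, he1⟩ := Option.isSome_iff_exists.1 hs
    obtain ⟨e2, he2⟩ := Option.isSome_iff_exists.1 hs2
    rw [he1, he2] at h
    simp only [Option.map_some, Option.some.injEq, ← add_assoc] at h
    exact ⟨e1, e2, h⟩
  have R : off k (i1 + α) = off k i2 := by
    obtain ⟨a, ha, hoa⟩ := exists_res hk0 (i1 + α + a0) 0 hk0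
    obtain ⟨b, hb, hob⟩ := exists_res hk0 (j2 + b0) (k - 1) (by omega)
    obtain ⟨e1, e2, he⟩ := H a ha b hb
    rw [hoa, hob] at he
    have hb1 := h0 e1 _ (off_lt hk0 (j1 + β + b0 + b))
    rw [he] at hb1
    have hz : off k (i2 + a0 + a) = 0 := by
      by_contra hne
      rw [h1 e2 _ (by omega) (off_lt hk0 _)] at hb1
      simp at hb1
    rw [← hoa, add_assoc, add_assoc (i1 + α)] at hz
    exact (cong_cancel hk0 hz).symm
  refine ⟨R, ?_⟩
  obtain ⟨a, ha, hoa⟩ := exists_res hk0 (i1 + α + a0) 1 (by omega)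
  obtain ⟨b, hb, hob⟩ := exists_res hk0 (j1 + β + b0) (k - 1) (by omega)
  obtain ⟨e1, e2, he⟩ := H a ha b hb
  obtain ⟨s, t, hst⟩ := cong_shift hk0 R
  have hoa2 := (hst (a0 + a)).2
  rw [← add_assoc, ← add_assoc, hoa] at hoa2
  rw [hoa, hob, ← hoa2] at he
  have hb1 := h1 e1 1 (by omega) (by omega)
  rw [he] at hb1
  have hz : off k (j2 + b0 + b) = k - 1 := by
    by_contra hne
    have := off_lt hk0 (j2 + b0 + b)
    rw [h2 e2 _ (by omega)] at hb1
    simp at hb1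
  rw [← hob, add_assoc, add_assoc (j1 + β)] at hz
  exact (cong_cancel hk0 hz).symm

theorem sync_all {k : ℕ} (hk : 3 ≤ k) (hk0 : 0 < k) (enc : B → ℕ → ℕ → C) (bit : C → Bool)
    (h0 : ∀ b v, v < k → bit (enc b 0 v) = true)
    (h1 : ∀ b u, 0 < u → u < k → bit (enc b u (k - 1)) = false)
    (h2 : ∀ b v, v < k - 1 → bit (enc b 1 v) = true)
    {S : Set (Picture B)} {x : Picture C} (hx : x ∈ Loc (2 * k) (blow k hk0 enc '' S))
    (i j : ℕ) : Vld (2 * k) x i j → ∀ y, ∀ i' j', Vld (2 * k) (blow k hk0 enc y) i' j' →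
      Agree (2 * k) x i j (blow k hk0 enc y) i' j' → off k i = off k i' ∧ off k j = off k j' := by
  induction i with
  | zero =>
    induction j with
    | zero =>
      intro _ y i' j' _ hag
      have e1 := hag 0 (by omega) 1 (by omega)
      have e2 := hag 1 (by omega) 0 (by omega)
      have e3 := hag 1 (by omega) 1 (by omega)
      have n1 : x.bpix (0 + 0) (0 + 1) = none := by rw [bpix_none_iff]; omega
      have n2 : x.bpix (0 + 1) (0 + 0) = none := by rw [bpix_none_iff]; omega
      have n3 : (x.bpix (0 + 1) (0 + 1)).isSome := by
        rw [bpix_isSome]; have := x.rows_pos; have := x.cols_pos; omega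
      rw [e1, bpix_none_iff] at n1
      rw [e2, bpix_none_iff] at n2
      rw [e3, bpix_isSome] at n3
      have : i' = 0 := by omega
      have : j' = 0 := by omega
      subst_vars
      exact ⟨rfl, rfl⟩
    | succ j ih =>
      intro hv y i' j' hv' hag
      have hv0 : Vld (2 * k) x 0 j := ⟨hv.1, by have := hv.2; omega⟩
      obtain ⟨_, ⟨y0, hy0, rfl⟩, i0, j0, hv2, hag0⟩ := hx 0 j hv0
      obtain ⟨c1, c2⟩ := ih hv0 y0 i0 j0 hv2 hag0
      obtain ⟨d1, d2⟩ := sync_step hk hk0 enc bit h0 h1 h2 (α := 0) (β := 1) (by omega) (by omega)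
        hv2 (y2 := y) (i2 := i') (j2 := j') (fun a b ha hb => by
          have q1 := hag0 a (by omega) (1 + b) (by omega)
          have q2 := hag a (by omega) b (by omega)
          rw [← q2, add_zero, add_assoc j0, ← q1, add_assoc j])
      obtain ⟨s, t, hst⟩ := cong_shift hk0 c2
      exact ⟨c1.trans d1, (hst 1).2.trans d2⟩
  | succ i ih =>
    intro hv y i' j' hv' hag
    have hv0 : Vld (2 * k) x i j := ⟨by have := hv.1; omega, hv.2⟩
    obtain ⟨_, ⟨y0, hy0, rfl⟩, i0, j0, hv2, hag0⟩ := hx i j hv0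
    obtain ⟨c1, c2⟩ := ih hv0 y0 i0 j0 hv2 hag0
    obtain ⟨d1, d2⟩ := sync_step hk hk0 enc bit h0 h1 h2 (α := 1) (β := 0) (by omega) (by omega)
      hv2 (y2 := y) (i2 := i') (j2 := j') (fun a b ha hb => by
        have q1 := hag0 (1 + a) (by omega) b (by omega)
        have q2 := hag a (by omega) b (by omega)
        rw [← q2, add_zero, add_assoc i0, ← q1, add_assoc i])
    obtain ⟨s, t, hst⟩ := cong_shift hk0 c1
    exact ⟨(hst 1).2.trans d1, c2.trans d2⟩

theorem step1 {k : ℕ} (hk : 3 ≤ k) (hk0 : 0 < k) (enc : B → ℕ → ℕ → C) (bit : C → Bool)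
    (h0 : ∀ b v, v < k → bit (enc b 0 v) = true)
    (h1 : ∀ b u, 0 < u → u < k → bit (enc b u (k - 1)) = false)
    (h2 : ∀ b v, v < k - 1 → bit (enc b 1 v) = true)
    (hinj : ∀ b b', (∀ u < k, ∀ v < k, enc b u v = enc b' u v) → b = b')
    {S : Set (Picture B)} (hS : Loc 2 S ⊆ S) :
    Loc (2 * k) (blow k hk0 enc '' S) ⊆ blow k hk0 enc '' S := by
  intro x hx
  have hsync := sync_all hk hk0 enc bit h0 h1 h2 hx
  -- refined witnesses
  have hw : ∀ i j, Vld (2 * k) x i j → ∃ y ∈ S, ∃ i' j', Vld (2 * k) (blow k hk0 enc y) i' j' ∧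
      Agree (2 * k) x i j (blow k hk0 enc y) i' j' ∧ off k i = off k i' ∧ off k j = off k j' := by
    intro i j hv
    obtain ⟨_, ⟨y0, hy0, rfl⟩, i0, j0, hv2, hag0⟩ := hx i j hv
    exact ⟨y0, hy0, i0, j0, hv2, hag0, hsync i j hv y0 i0 j0 hv2 hag0⟩
  have hrp := x.rows_pos
  have hcp := x.cols_pos
  -- rows and columns are multiples of k
  have hrows : ∃ a, x.rows = a * k := by
    have hv : Vld (2 * k) x (max (x.rows + 2) (2 * k) - 2 * k) 0 := by
      simp only [Vld, borderRows, borderCols]; omega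
    generalize hi : max (x.rows + 2) (2 * k) - 2 * k = i at hv
    obtain ⟨y, hy, i', j', hv', hag, c1, c2⟩ := hw _ _ hv
    obtain ⟨a, ha⟩ : ∃ a, i + a = x.rows := ⟨x.rows - i, by omega⟩
    have e1 := hag a (by omega) 1 (by omega)
    have e2 := hag (a + 1) (by omega) 1 (by omega)
    have n1 : (x.bpix (i + a) (0 + 1)).isSome := by rw [bpix_isSome]; omega
    have n2 : x.bpix (i + (a + 1)) (0 + 1) = none := by rw [bpix_none_iff]; omega
    rw [e1, bpix_isSome] at n1
    rw [e2, bpix_none_iff] at n2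
    have e3 : i' + a = y.rows * k := by
      have : (blow k hk0 enc y).rows = y.rows * k := rfl
      omega
    obtain ⟨s, t, hst⟩ := cong_shift hk0 c1
    have e4 := (hst a).2
    rw [ha, e3] at e4
    have e5 := blk_add_mul hk0 0 y.rows
    rw [zero_add] at e5
    rw [e5.2] at e4
    have e6 := blk_off_uniq (k := k) (r := 0) (I := 0) (u := k - 1) (by omega) (by omega)
    have e7 := blk_off hk0 x.rows
    exact ⟨blk k x.rows, by omega⟩
  have hcols : ∃ b, x.cols = b * k := by
    have hv : Vld (2 * k) x 0 (max (x.cols + 2) (2 * k) - 2 * k) := by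
      simp only [Vld, borderRows, borderCols]; omega
    generalize hi : max (x.cols + 2) (2 * k) - 2 * k = j at hv
    obtain ⟨y, hy, i', j', hv', hag, c1, c2⟩ := hw _ _ hv
    obtain ⟨a, ha⟩ : ∃ a, j + a = x.cols := ⟨x.cols - j, by omega⟩
    have e1 := hag 1 (by omega) a (by omega)
    have e2 := hag 1 (by omega) (a + 1) (by omega)
    have n1 : (x.bpix (0 + 1) (j + a)).isSome := by rw [bpix_isSome]; omega
    have n2 : x.bpix (0 + 1) (j + (a + 1)) = none := by rw [bpix_none_iff]; omega
    rw [e1, bpix_isSome] at n1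
    rw [e2, bpix_none_iff] at n2
    have e3 : j' + a = y.cols * k := by
      have : (blow k hk0 enc y).cols = y.cols * k := rfl
      omega
    obtain ⟨s, t, hst⟩ := cong_shift hk0 c2
    have e4 := (hst a).2
    rw [ha, e3] at e4
    have e5 := blk_add_mul hk0 0 y.cols
    rw [zero_add] at e5
    rw [e5.2] at e4
    have e6 := blk_off_uniq (k := k) (r := 0) (I := 0) (u := k - 1) (by omega) (by omega)
    have e7 := blk_off hk0 x.cols
    exact ⟨blk k x.cols, by omega⟩
  obtain ⟨a, har⟩ := hrows
  obtain ⟨b, hbc⟩ := hcols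
  have ha : 0 < a := Nat.pos_of_ne_zero (by rintro rfl; omega)
  have hb : 0 < b := Nat.pos_of_ne_zero (by rintro rfl; omega)
  have hbr : borderRows x (2 * k) = max (a * k + 2) (2 * k) := by rw [← har]; rfl
  have hbcl : borderCols x (2 * k) = max (b * k + 2) (2 * k) := by rw [← hbc]; rfl
  -- decoding each block
  have hdec : ∀ I J, I < a → J < b → ∃ e : B, ∀ u < k, ∀ v < k,
      x.pget (I * k + u) (J * k + v) = some (enc e u v) := by
    intro I J hI hJ
    obtain ⟨i, u0, -, w1, w2, -, w3, -, w4, -⟩ := win_block hk ha (show I + 1 ≤ a by omega)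
    obtain ⟨j, v0, -, z1, z2, -, z3, -, z4, -⟩ := win_block hk hb (show J + 1 ≤ b by omega)
    obtain ⟨w4, w5⟩ := w4 (by omega)
    obtain ⟨z4, z5⟩ := z4 (by omega)
    obtain ⟨y, hy, i', j', hv', hag, c1, c2⟩ := hw i j ⟨by rw [hbr]; exact w1, by rw [hbcl]; exact z1⟩
    obtain ⟨s, t, hst⟩ := cong_shift hk0 c1
    obtain ⟨s', t', hst'⟩ := cong_shift hk0 c2
    have e1 := blk_off hk0 (i' + u0)
    have e2 := blk_off hk0 (j' + v0)
    rw [← (hst u0).2, w5] at e1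
    rw [← (hst' v0).2, z5] at e2
    have e3 := blk_off hk0 (i + u0)
    have e4 := blk_off hk0 (j + v0)
    rw [w3, w5, add_mul] at e3
    rw [z3, z5, add_mul] at e4
    have key : ∀ u < k, ∀ v < k, x.pget (I * k + u) (J * k + v) =
        (y.bpix (blk k (i' + u0)) (blk k (j' + v0))).map (fun e => enc e u v) := by
      intro u hu v hv
      have q := hag (u0 + u) (by omega) (v0 + v) (by omega)
      rw [blow_bpix] at q
      have r1 : i + (u0 + u) = I * k + u + 1 := by omega
      have r2 : j + (v0 + v) = J * k + v + 1 := by omega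
      rw [r1, r2, bpix_succ] at q
      obtain ⟨s1, s2⟩ := blk_off_uniq (r := i' + (u0 + u)) (I := blk k (i' + u0)) hu (by omega)
      obtain ⟨s3, s4⟩ := blk_off_uniq (r := j' + (v0 + v)) (I := blk k (j' + v0)) hv (by omega)
      rw [s1, s2, s3, s4] at q
      exact q
    have hs : (x.pget (I * k + 0) (J * k + 0)).isSome := by
      have r1 : (I + 1) * k ≤ a * k := Nat.mul_le_mul_right _ (by omega)
      have r2 : (J + 1) * k ≤ b * k := Nat.mul_le_mul_right _ (by omega)
      rw [add_mul] at r1 r2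
      rw [← bpix_succ, bpix_isSome]
      omega
    rw [key 0 hk0 0 hk0, Option.isSome_map] at hs
    obtain ⟨e, he⟩ := Option.isSome_iff_exists.1 hs
    refine ⟨e, fun u hu v hv => ?_⟩
    rw [key u hu v hv, he]
    rfl
  have : Nonempty B := ⟨(hdec 0 0 ha hb).choose⟩
  choose! e he using hdec
  let y : Picture B := ⟨a, b, ha, hb, fun I J => e I J⟩
  have hxy : blow k hk0 enc y = x := by
    apply pic_ext
    · exact har.symm
    · exact hbc.symm
    · intro i j hi hj
      have hi' : i < a * k := hi
      have hj' : j < b * k := hj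
      have r1 : i / k < a := Nat.div_lt_of_lt_mul (by rw [mul_comm]; exact hi')
      have r2 : j / k < b := Nat.div_lt_of_lt_mul (by rw [mul_comm]; exact hj')
      have q := he (i / k) (j / k) r1 r2 (i % k) (Nat.mod_lt _ hk0) (j % k) (Nat.mod_lt _ hk0)
      rw [Nat.div_add_mod', Nat.div_add_mod'] at q
      rw [q]
      unfold Picture.pget
      rw [dif_pos ⟨hi, hj⟩]
      rfl
  refine ⟨y, hS ?_, hxy⟩
  intro I J hv
  have hI : I ≤ a := by
    have := hv.1
    simp only [borderRows, y] at this; omega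
  have hJ : J ≤ b := by
    have := hv.2
    simp only [borderCols, y] at this; omega
  obtain ⟨i, u0, u1, w1, w20, w21, w30, w31, w40, w41⟩ := win_block hk ha hI
  obtain ⟨j, v0, v1, z1, z20, z21, z30, z31, z40, z41⟩ := win_block hk hb hJ
  obtain ⟨y', hy', i', j', hv', hag, c1, c2⟩ := hw i j ⟨by rw [hbr]; exact w1, by rw [hbcl]; exact z1⟩
  obtain ⟨s, t, hst⟩ := cong_shift hk0 c1
  obtain ⟨s', t', hst'⟩ := cong_shift hk0 c2
  -- general comparison
  have main : ∀ P Q u v, blk k (i + u) = P → blk k (j + v) = Q → u < 2 * k → v < 2 * k →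
      (1 ≤ P → P ≤ a → u + k ≤ 2 * k ∧ off k (i + u) = 0) →
      (1 ≤ Q → Q ≤ b → v + k ≤ 2 * k ∧ off k (j + v) = 0) →
      y.bpix P Q = y'.bpix (blk k (i' + u)) (blk k (j' + v)) := by
    intro P Q u v hP hQ hu hv hPu hQv
    by_cases hc : 1 ≤ P ∧ P ≤ a ∧ 1 ≤ Q ∧ Q ≤ b
    · obtain ⟨p1, p2⟩ := hPu hc.1 hc.2.1
      obtain ⟨q1, q2⟩ := hQv hc.2.2.1 hc.2.2.2
      have e1 := blk_off hk0 (i + u)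
      have e2 := blk_off hk0 (j + v)
      have e3 := blk_off hk0 (i' + u)
      have e4 := blk_off hk0 (j' + v)
      rw [p2] at e1
      rw [q2] at e2
      rw [← (hst u).2, p2] at e3
      rw [← (hst' v).2, q2] at e4
      have key : ∀ α < k, ∀ β < k, (y.bpix P Q).map (fun e => enc e α β) =
          (y'.bpix (blk k (i' + u)) (blk k (j' + v))).map (fun e => enc e α β) := by
        intro α hα β hβ
        have q := hag (u + α) (by omega) (v + β) (by omega)
        rw [← hxy, blow_bpix, blow_bpix] at q
        obtain ⟨s1, s2⟩ := blk_off_uniq (r := i + (u + α)) (I := blk k (i + u)) hα (by omega)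
        obtain ⟨s3, s4⟩ := blk_off_uniq (r := j + (v + β)) (I := blk k (j + v)) hβ (by omega)
        obtain ⟨s5, s6⟩ := blk_off_uniq (r := i' + (u + α)) (I := blk k (i' + u)) hα (by omega)
        obtain ⟨s7, s8⟩ := blk_off_uniq (r := j' + (v + β)) (I := blk k (j' + v)) hβ (by omega)
        rw [s1, s2, s3, s4, s5, s6, s7, s8, hP, hQ] at q
        exact q
      have hs : (y.bpix P Q).isSome := by rw [bpix_isSome]; exact hc
      obtain ⟨e1, he1⟩ := Option.isSome_iff_exists.1 hs
      have hs2 : (y'.bpix (blk k (i' + u)) (blk k (j' + v))).isSome := by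
        have := key 0 hk0 0 hk0
        rw [← Option.isSome_map (f := fun e => enc e 0 0), ← this, Option.isSome_map]
        exact hs
      obtain ⟨e2, he2⟩ := Option.isSome_iff_exists.1 hs2
      rw [he1, he2] at key ⊢
      congr 1
      apply hinj
      intro α hα β hβ
      simpa using key α hα β hβ
    · have n1 : y.bpix P Q = none := (bpix_none_iff _ _ _).2 hc
      have q := hag u hu v hv
      rw [← hxy, blow_bpix, blow_bpix, hP, hQ, n1] at q
      rw [n1]
      exact (by simpa using q.symm : _ = none).symm
  have t1 : blk k (i' + u1) = blk k (i' + u0) + 1 := by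
    have := (hst u0).1
    have := (hst u1).1
    omega
  have t2 : blk k (j' + v1) = blk k (j' + v0) + 1 := by
    have := (hst' v0).1
    have := (hst' v1).1
    omega
  have m00 := main I J u0 v0 w30 z30 w20 z20 (fun h _ => w40 h) (fun h _ => z40 h)
  have m01 := main I (J + 1) u0 v1 w30 z31 w20 z21 (fun h _ => w40 h) (fun _ h => z41 h)
  have m10 := main (I + 1) J u1 v0 w31 z30 w21 z20 (fun _ h => w41 h) (fun h _ => z40 h)
  have m11 := main (I + 1) (J + 1) u1 v1 w31 z31 w21 z21 (fun _ h => w41 h) (fun _ h => z41 h)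
  rw [t1] at m10 m11
  rw [t2] at m01 m11
  have hag2 : Agree 2 y I J y' (blk k (i' + u0)) (blk k (j' + v0)) := by
    intro α hα β hβ
    interval_cases α <;> interval_cases β <;> assumption
  refine ⟨y', hy', _, _, ?_, hag2⟩
  -- validity
  have hh : ∀ α < 2, ∀ β < 2, (1 ≤ I + α ∧ I + α ≤ a ∧ 1 ≤ J + β ∧ J + β ≤ b) →
      (1 ≤ blk k (i' + u0) + α ∧ blk k (i' + u0) + α ≤ y'.rows ∧
        1 ≤ blk k (j' + v0) + β ∧ blk k (j' + v0) + β ≤ y'.cols) := by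
    intro α hα β hβ h
    rw [← bpix_isSome, ← hag2 α hα β hβ, bpix_isSome]
    exact h
  have g00 := hh 0 (by omega) 0 (by omega)
  have g01 := hh 0 (by omega) 1 (by omega)
  have g10 := hh 1 (by omega) 0 (by omega)
  have g11 := hh 1 (by omega) 1 (by omega)
  simp only [Vld, borderRows, borderCols]
  omega

end Step1
section Step2

/-- Block alphabet: block of labels together with side data. -/
abbrev BlkD (Gam : Type) (k : ℕ) : Type :=
  (Fin k × Fin k) × ((Fin k → Option Gam) × (Fin k → Option Gam))

/-- Block alphabet. -/
abbrev BlkT (Sig Gam : Type) (k : ℕ) : Type :=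
  (Fin k → Fin k → Option Sig) × BlkD Gam k

variable {Sig Gam : Type}

/-- The block of `p` at block position `(I,J)` (0-based). -/
def blkPix (k : ℕ) (hk : 0 < k) (π : Gam → Sig) (p : Picture Gam) (I J : ℕ) : BlkT Sig Gam k :=
  (fun u v => (p.pget (I * k + u) (J * k + v)).map π,
    (⟨p.rows % k, Nat.mod_lt _ hk⟩, ⟨p.cols % k, Nat.mod_lt _ hk⟩),
    (fun v => p.pget (I * k) (J * k + v)), fun u => p.pget (I * k + u) (J * k))

/-- The picture of blocks of `p`. -/
def blkOf (k : ℕ) (hk : 0 < k) (π : Gam → Sig) (p : Picture Gam) : Picture (BlkT Sig Gam k) :=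
  ⟨p.rows / k + 1, p.cols / k + 1, Nat.succ_pos _, Nat.succ_pos _, fun I J => blkPix k hk π p I J⟩

theorem dim1 {k a μ m I I' q u R R' N : ℕ} (hI : 1 ≤ I) (hIa : I ≤ a)
    (h0 : I = 0 ↔ I' = 0) (h1 : I = a ↔ I' = q + 1) (hI' : I' ≤ q + 1)
    (hu : u < k) (hR : R + k = I * k + u + 1) (hR' : R' + k = I' * k + u + 1)
    (hN : N = q * k + μ) (hm : m + k = a * k + μ) : 1 ≤ R' ∧ (R' ≤ N ↔ R ≤ m) := by
  have hI1 : 1 * k ≤ I' * k := Nat.mul_le_mul_right _ (by omega)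
  refine ⟨by omega, ?_⟩
  by_cases h : I = a
  · have h' := h1.1 h
    subst h h'
    rw [add_mul] at hR'
    omega
  · have h' : I' ≤ q := by
      have : I' ≠ q + 1 := fun hh => h (h1.2 hh)
      omega
    have e1 : (I + 1) * k ≤ a * k := Nat.mul_le_mul_right _ (by omega)
    have e2 : I' * k ≤ q * k := Nat.mul_le_mul_right _ h'
    rw [add_mul] at e1
    constructor <;> intro <;> omega

/-- `y` carries the labels of `p` padded. -/
def IsLab (k : ℕ) (π : Gam → Sig) (y : Picture (BlkT Sig Gam k)) (p : Picture Gam) : Prop :=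
  y.rows = p.rows / k + 1 ∧ y.cols = p.cols / k + 1 ∧
    ∀ (I : Fin y.rows) (J : Fin y.cols) (u v : Fin k),
      (y.pix I J).1 u v = (p.pget (I * k + u) (J * k + v)).map π

theorem bpix_pget (p : Picture Gam) {k X Y u v R C : ℕ} (hX : 1 ≤ X) (hY : 1 ≤ Y)
    (hR : R + k = X * k + u + 1) (hC : C + k = Y * k + v + 1) :
    p.bpix R C = p.pget ((X - 1) * k + u) ((Y - 1) * k + v) := by
  obtain ⟨x, rfl⟩ : ∃ x, X = x + 1 := ⟨X - 1, by omega⟩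
  obtain ⟨y, rfl⟩ : ∃ y, Y = y + 1 := ⟨Y - 1, by omega⟩
  rw [add_mul] at hR hC
  have h1 : R = (x + 1 - 1) * k + u + 1 := by rw [Nat.add_sub_cancel]; omega
  have h2 : C = (y + 1 - 1) * k + v + 1 := by rw [Nat.add_sub_cancel]; omega
  rw [h1, h2, bpix_succ]

theorem step2 {k : ℕ} (hk : 0 < k) (π : Gam → Sig) {S : Set (Picture Gam)} (hS : Loc 2 S ⊆ S)
    {y : Picture (BlkT Sig Gam k)} (hy : y ∈ Loc 2 (blkOf k hk π '' S)) :
    ∃ p ∈ S, IsLab k π y p := by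
  have hw : ∀ I J, I ≤ y.rows → J ≤ y.cols → ∃ g ∈ S, ∃ I' J',
      Agree 2 y I J (blkOf k hk π g) I' J' ∧ I' ≤ g.rows / k + 1 ∧ J' ≤ g.cols / k + 1 ∧
      ((I = 0 ↔ I' = 0) ∧ (I = y.rows ↔ I' = g.rows / k + 1)) ∧
      ((J = 0 ↔ J' = 0) ∧ (J = y.cols ↔ J' = g.cols / k + 1)) := by
    intro I J hI hJ
    have hv : Vld 2 y I J := by simp only [Vld, borderRows, borderCols]; omega
    obtain ⟨_, ⟨g, hg, rfl⟩, I', J', hv', hag⟩ := hy I J hv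
    have h := agree2 hag hv hv'
    have e1 : (blkOf k hk π g).rows = g.rows / k + 1 := rfl
    have e2 : (blkOf k hk π g).cols = g.cols / k + 1 := rfl
    simp only [Vld, borderRows, borderCols] at hv'
    exact ⟨g, hg, I', J', hag, by omega, by omega, h⟩
  have : Nonempty (Picture Gam) := ⟨(hw 0 0 (by omega) (by omega)).choose⟩
  choose! g hgS I' J' hag hI' hJ' hIs hJs using hw
  have hap := y.rows_pos
  have hbp := y.cols_pos
  -- cells of the witnesses
  have cell : ∀ I J, I ≤ y.rows → J ≤ y.cols → ∀ α < 2, ∀ β < 2,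
      1 ≤ I + α → I + α ≤ y.rows → 1 ≤ J + β → J + β ≤ y.cols →
      y.bpix (I + α) (J + β) =
        some (blkPix k hk π (g I J) (I' I J + α - 1) (J' I J + β - 1)) ∧
        1 ≤ I' I J + α ∧ 1 ≤ J' I J + β := by
    intro I J hI hJ α hα β hβ h1 h2 h3 h4
    have h := hag I J hI hJ α hα β hβ
    have hs : (y.bpix (I + α) (J + β)).isSome := by rw [bpix_isSome]; omega
    rw [h] at hs ⊢
    rw [bpix_isSome] at hs
    rw [bpix_some hs]
    exact ⟨rfl, hs.1, hs.2.2.1⟩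
  -- constant side data
  have modc : ∀ I J, I ≤ y.rows → J ≤ y.cols → ∀ α < 2, ∀ β < 2,
      1 ≤ I + α → I + α ≤ y.rows → 1 ≤ J + β → J + β ≤ y.cols →
      (y.bpix (I + α) (J + β)).map (fun e => ((e.2.1.1 : ℕ), (e.2.1.2 : ℕ))) =
        some ((g I J).rows % k, (g I J).cols % k) := by
    intro I J hI hJ α hα β hβ h1 h2 h3 h4
    rw [(cell I J hI hJ α hα β hβ h1 h2 h3 h4).1]
    rfl
  obtain ⟨μ, hμ⟩ : ∃ μ, μ = (g 1 1).rows % k := ⟨_, rfl⟩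
  obtain ⟨ν, hν⟩ : ∃ ν, ν = (g 1 1).cols % k := ⟨_, rfl⟩
  have hμk : μ < k := hμ ▸ Nat.mod_lt _ hk
  have hνk : ν < k := hν ▸ Nat.mod_lt _ hk
  have constc : ∀ J, J + 1 ≤ y.cols →
      (y.bpix 1 (J + 1)).map (fun e => ((e.2.1.1 : ℕ), (e.2.1.2 : ℕ))) = some (μ, ν) := by
    intro J
    induction J with
    | zero =>
      intro _
      have := modc 1 1 (by omega) (by omega) 0 (by omega) 0 (by omega) (by omega) (by omega)
        (by omega) (by omega)
      rw [hμ, hν]; exact this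
    | succ J ih =>
      intro hJ
      have e1 := modc 1 (J + 1) (by omega) (by omega) 0 (by omega) 0 (by omega) (by omega)
        (by omega) (by omega) (by omega)
      have e2 := modc 1 (J + 1) (by omega) (by omega) 0 (by omega) 1 (by omega) (by omega)
        (by omega) (by omega) (by omega)
      rw [← ih (by omega)]
      exact e2.trans e1.symm
  have constcr : ∀ I J, I + 1 ≤ y.rows → J + 1 ≤ y.cols →
      (y.bpix (I + 1) (J + 1)).map (fun e => ((e.2.1.1 : ℕ), (e.2.1.2 : ℕ))) = some (μ, ν) := by
    intro I J
    induction I with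
    | zero => intro _ hJ; exact constc J hJ
    | succ I ih =>
      intro hI hJ
      have e1 := modc (I + 1) (J + 1) (by omega) (by omega) 0 (by omega) 0 (by omega) (by omega)
        (by omega) (by omega) (by omega)
      have e2 := modc (I + 1) (J + 1) (by omega) (by omega) 1 (by omega) 0 (by omega) (by omega)
        (by omega) (by omega) (by omega)
      rw [← ih (by omega) hJ]
      exact e2.trans e1.symm
  have hmod : ∀ I J, I ≤ y.rows → J ≤ y.cols →
      (g I J).rows = (g I J).rows / k * k + μ ∧ (g I J).cols = (g I J).cols / k * k + ν := by
    intro I J hI hJ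
    obtain ⟨α, hα, P, hP, hP2⟩ : ∃ α < 2, ∃ P, I + α = P + 1 ∧ P + 1 ≤ y.rows := by
      rcases Nat.eq_zero_or_pos I with h | h
      · exact ⟨1, by omega, 0, by omega, by omega⟩
      · exact ⟨0, by omega, I - 1, by omega, by omega⟩
    obtain ⟨β, hβ, Q, hQ, hQ2⟩ : ∃ β < 2, ∃ Q, J + β = Q + 1 ∧ Q + 1 ≤ y.cols := by
      rcases Nat.eq_zero_or_pos J with h | h
      · exact ⟨1, by omega, 0, by omega, by omega⟩
      · exact ⟨0, by omega, J - 1, by omega, by omega⟩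
    have e1 := modc I J hI hJ α hα β hβ (by omega) (by omega) (by omega) (by omega)
    rw [hP, hQ, constcr P Q hP2 hQ2] at e1
    simp only [Option.some.injEq, Prod.mk.injEq] at e1
    have d1 := Nat.div_add_mod' (g I J).rows k
    have d2 := Nat.div_add_mod' (g I J).cols k
    omega
  obtain ⟨m, hm⟩ : ∃ m, m + k = y.rows * k + μ := by
    have : 1 * k ≤ y.rows * k := Nat.mul_le_mul_right _ hap
    exact ⟨y.rows * k + μ - k, by omega⟩
  obtain ⟨n, hn⟩ : ∃ n, n + k = y.cols * k + ν := by
    have : 1 * k ≤ y.cols * k := Nat.mul_le_mul_right _ hbp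
    exact ⟨y.cols * k + ν - k, by omega⟩
  -- the assembled picture
  let F : ℕ → ℕ → Option Gam := fun R C =>
    (g (blk k R) (blk k C)).bpix (I' (blk k R) (blk k C) * k + off k R + 1 - k)
      (J' (blk k R) (blk k C) * k + off k C + 1 - k)
  have shape : ∀ R C, 1 ≤ R → R ≤ y.rows * k → 1 ≤ C → C ≤ y.cols * k →
      ((F R C).isSome ↔ R ≤ m ∧ C ≤ n) := by
    intro R C h1 h2 h3 h4
    have i1 := (blk_pos hk R).2 h1
    have i2 := (blk_le hk R _).2 h2
    have i3 := (blk_pos hk C).2 h3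
    have i4 := (blk_le hk C _).2 h4
    have hIs' := hIs _ _ i2 i4
    have hJs' := hJs _ _ i2 i4
    have p1 : 1 * k ≤ I' (blk k R) (blk k C) * k := Nat.mul_le_mul_right _ (by omega)
    have p2 : 1 * k ≤ J' (blk k R) (blk k C) * k := Nat.mul_le_mul_right _ (by omega)
    have d1 := dim1 (R' := I' (blk k R) (blk k C) * k + off k R + 1 - k) i1 i2 hIs'.1 hIs'.2
      (hI' _ _ i2 i4) (off_lt hk R) (blk_off hk R)
      (by omega) (hmod _ _ i2 i4).1 hm
    have d2 := dim1 (R' := J' (blk k R) (blk k C) * k + off k C + 1 - k) i3 i4 hJs'.1 hJs'.2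
      (hJ' _ _ i2 i4) (off_lt hk C) (blk_off hk C)
      (by omega) (hmod _ _ i2 i4).2 hn
    simp only [F]
    rw [bpix_isSome]
    rw [d1.2, d2.2]
    constructor
    · rintro ⟨_, h, _, h'⟩; exact ⟨h, h'⟩
    · rintro ⟨h, h'⟩; exact ⟨d1.1, h, d2.1, h'⟩
  have Fpget : ∀ R C, 1 ≤ R → R ≤ y.rows * k → 1 ≤ C → C ≤ y.cols * k →
      F R C = (g (blk k R) (blk k C)).pget
        ((I' (blk k R) (blk k C) - 1) * k + off k R) ((J' (blk k R) (blk k C) - 1) * k + off k C) := by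
    intro R C h1 h2 h3 h4
    have i1 := (blk_pos hk R).2 h1
    have i2 := (blk_le hk R _).2 h2
    have i3 := (blk_pos hk C).2 h3
    have i4 := (blk_le hk C _).2 h4
    have hIs' := hIs _ _ i2 i4
    have hJs' := hJs _ _ i2 i4
    have p1 : 1 * k ≤ I' (blk k R) (blk k C) * k := Nat.mul_le_mul_right _ (by omega)
    have p2 : 1 * k ≤ J' (blk k R) (blk k C) * k := Nat.mul_le_mul_right _ (by omega)
    simp only [F]
    exact bpix_pget _ (by omega) (by omega) (by omega) (by omega)
  have own : ∀ R C, 1 ≤ R → R ≤ y.rows * k → 1 ≤ C → C ≤ y.cols * k →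
      y.bpix (blk k R) (blk k C) = some (blkPix k hk π (g (blk k R) (blk k C))
        (I' (blk k R) (blk k C) - 1) (J' (blk k R) (blk k C) - 1)) := by
    intro R C h1 h2 h3 h4
    have i1 := (blk_pos hk R).2 h1
    have i2 := (blk_le hk R _).2 h2
    have i3 := (blk_pos hk C).2 h3
    have i4 := (blk_le hk C _).2 h4
    exact (cell _ _ i2 i4 0 (by omega) 0 (by omega) (by omega) (by omega) (by omega) (by omega)).1
  have hk1 : 1 * k ≤ y.rows * k := Nat.mul_le_mul_right _ hap
  have hk2 : 1 * k ≤ y.cols * k := Nat.mul_le_mul_right _ hbp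
  have hlab : ∀ R C, 1 ≤ R → R ≤ y.rows * k → 1 ≤ C → C ≤ y.cols * k → ∀ e,
      y.bpix (blk k R) (blk k C) = some e →
      e.1 ⟨off k R, off_lt hk R⟩ ⟨off k C, off_lt hk C⟩ = (F R C).map π := by
    intro R C h1 h2 h3 h4 e he
    rw [own R C h1 h2 h3 h4] at he
    rw [Fpget R C h1 h2 h3 h4]
    simp only [Option.some.injEq] at he
    rw [← he]
    rfl
  have hpos : 1 ≤ m ∧ 1 ≤ n := by
    rw [← shape 1 1 (by omega) (by omega) (by omega) (by omega)]
    have b1 := blk_off_uniq (k := k) (r := 1) (I := 1) (u := 0) hk (by omega)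
    have e1 := (cell 0 0 (by omega) (by omega) 1 (by omega) 1 (by omega) (by omega) (by omega)
      (by omega) (by omega)).1
    have z1 := (hIs 0 0 (by omega) (by omega)).1.1 rfl
    have z2 := (hJs 0 0 (by omega) (by omega)).1.1 rfl
    have e2 := hlab 1 1 (by omega) (by omega) (by omega) (by omega)
      _ (by rw [b1.1]; exact e1)
    rw [← Option.isSome_map (f := π), ← e2]
    simp only [blkPix, b1.2, z1, z2, Option.isSome_map]
    rw [← bpix_succ, bpix_isSome]
    have := (g 0 0).rows_pos
    have := (g 0 0).cols_pos
    simp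
    omega
  have hmle : m + 1 ≤ y.rows * k := by omega
  have hnle : n + 1 ≤ y.cols * k := by omega
  let p : Picture Gam := ⟨m, n, hpos.1, hpos.2, fun i j => (F (i + 1) (j + 1)).get
    ((shape _ _ (by omega) (by omega) (by omega) (by omega)).2 ⟨by omega, by omega⟩)⟩
  have hp : ∀ R C, 1 ≤ R → R ≤ y.rows * k → 1 ≤ C → C ≤ y.cols * k → p.bpix R C = F R C := by
    intro R C h1 h2 h3 h4
    by_cases hc : R ≤ m ∧ C ≤ n
    · rw [bpix_some (p := p) ⟨h1, hc.1, h3, hc.2⟩]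
      obtain ⟨R, rfl⟩ : ∃ r, R = r + 1 := ⟨R - 1, by omega⟩
      obtain ⟨C, rfl⟩ : ∃ c, C = c + 1 := ⟨C - 1, by omega⟩
      simp [p]
    · have e1 : F R C = none := by
        rw [← shape R C h1 h2 h3 h4] at hc
        simpa using hc
      rw [e1, bpix_none_iff]
      rintro ⟨_, q1, _, q2⟩
      exact hc ⟨q1, q2⟩
  have hpS : p ∈ S := by
    apply hS
    intro r c hv
    have hr : r ≤ m := by
      have := hv.1
      simp only [borderRows, p] at this; omega
    have hc : c ≤ n := by
      have := hv.2
      simp only [borderCols, p] at this; omega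
    have hI : blk k r ≤ y.rows := (blk_le hk r _).2 (by omega)
    have hJ : blk k c ≤ y.cols := (blk_le hk c _).2 (by omega)
    obtain ⟨I, hIe⟩ : ∃ I, I = blk k r := ⟨_, rfl⟩
    obtain ⟨J, hJe⟩ : ∃ J, J = blk k c := ⟨_, rfl⟩
    rw [← hIe] at hI
    rw [← hJe] at hJ
    obtain ⟨zI, lI⟩ := hIs I J hI hJ
    obtain ⟨zJ, lJ⟩ := hJs I J hI hJ
    have br := blk_off hk r
    have bc := blk_off hk c
    have or := off_lt hk r
    have oc := off_lt hk c
    rw [← hIe] at br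
    rw [← hJe] at bc
    -- translated coordinates
    have tr : ∀ {q X X' N A M μ' : ℕ}, q ≤ M → q + k = X * k + off k q + 1 → X ≤ A →
        (X = 0 ↔ X' = 0) → (X = A ↔ X' = N / k + 1) → X' ≤ N / k + 1 → N = N / k * k + μ' →
        M + k = A * k + μ' → ∃ q', q' + k = X' * k + off k q + 1 ∧ q' ≤ N := by
      intro q X X' N A M μ' h1 h2 h3 h4 h5 h6 h7 h8
      rcases Nat.eq_zero_or_pos X with h | h
      · have h' := h4.1 h
        have h9 := off_lt hk q
        subst h h'
        exact ⟨q, by omega, by omega⟩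
      · have h9 : 1 * k ≤ X' * k := Nat.mul_le_mul_right _ (by omega)
        have d := dim1 (R' := X' * k + off k q + 1 - k) h h3 h4 h5 h6 (off_lt hk q) h2
          (by omega) h7 h8
        exact ⟨X' * k + off k q + 1 - k, by omega, d.2.2 h1⟩
    obtain ⟨r', hr'1, hr'2⟩ := tr hr br hI zI lI (hI' I J hI hJ) (hmod I J hI hJ).1 hm
    obtain ⟨c', hc'1, hc'2⟩ := tr hc bc hJ zJ lJ (hJ' I J hI hJ) (hmod I J hI hJ).2 hn
    refine ⟨g I J, hgS I J hI hJ, r', c', ?_, ?_⟩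
    · simp only [Vld, borderRows, borderCols]; omega
    -- one-step analysis
    have stp : ∀ {q X X' q' α : ℕ}, α < 2 → X = blk k q → q + k = X * k + off k q + 1 →
        q' + k = X' * k + off k q + 1 → ∃ A < 2, blk k (q + α) = X + A ∧
          q' + α + k = (X' + A) * k + off k (q + α) + 1 ∧ (A = 1 → off k (q + α) = 0) := by
      intro q X X' q' α hα h1 h2 h3
      have h4 := off_lt hk q
      by_cases h : off k q + α < k
      · obtain ⟨e1, e2⟩ := blk_off_uniq (r := q + α) (I := X) h (by omega)
        exact ⟨0, by omega, e1, by rw [e2, add_zero]; omega, by omega⟩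
      · obtain ⟨e1, e2⟩ := blk_off_uniq (r := q + α) (I := X + 1) hk (by rw [add_mul]; omega)
        exact ⟨1, by omega, e1, by rw [e2, add_mul]; omega, fun _ => e2⟩
    intro α hα β hβ
    by_cases h0 : 1 ≤ r + α ∧ 1 ≤ c + β
    swap
    · have n1 : p.bpix (r + α) (c + β) = none := by rw [bpix_none_iff]; omega
      have n2 : (g I J).bpix (r' + α) (c' + β) = none := by
        rw [bpix_none_iff]
        rintro ⟨q1, _, q2, _⟩
        apply h0
        constructor
        · by_contra hh
          have hr0 : r = 0 := by omega
          have : I = 0 := by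
            have := (blk_pos hk r)
            omega
          rw [zI.1 this] at hr'1
          omega
        · by_contra hh
          have hr0 : c = 0 := by omega
          have : J = 0 := by
            have := (blk_pos hk c)
            omega
          rw [zJ.1 this] at hc'1
          omega
      rw [n1, n2]
    obtain ⟨A, hA, a1, a2, a3⟩ := stp hα hIe br hr'1
    obtain ⟨B, hB, b1, b2, b3⟩ := stp hβ hJe bc hc'1
    have r1 : r + α ≤ y.rows * k := by omega
    have c1 : c + β ≤ y.cols * k := by omega
    have i1 := (blk_pos hk (r + α)).2 h0.1
    have i2 := (blk_le hk (r + α) _).2 r1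
    have i3 := (blk_pos hk (c + β)).2 h0.2
    have i4 := (blk_le hk (c + β) _).2 c1
    rw [a1] at i1 i2
    rw [b1] at i3 i4
    obtain ⟨ce, ce1, ce2⟩ := cell I J hI hJ A hA B hB i1 i2 i3 i4
    have ow := own (r + α) (c + β) h0.1 r1 h0.2 c1
    rw [hp _ _ h0.1 r1 h0.2 c1, Fpget _ _ h0.1 r1 h0.2 c1, bpix_pget (g I J) ce1 ce2 a2 b2]
    by_cases hAB : A = 0 ∧ B = 0
    · obtain ⟨rfl, rfl⟩ := hAB
      rw [a1, b1]
      simp only [add_zero]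
    · rw [a1, b1] at ow ⊢
      rw [ce] at ow
      simp only [Option.some.injEq, blkPix, Prod.mk.injEq] at ow
      obtain ⟨_, _, f1, f2⟩ := ow
      have hAB' : A = 1 ∨ B = 1 := by omega
      rcases hAB' with h | h
      · have := congrFun f1 ⟨off k (c + β), off_lt hk _⟩
        rw [a3 h]
        exact this.symm
      · have := congrFun f2 ⟨off k (r + α), off_lt hk _⟩
        rw [b3 h]
        exact this.symm
  have hdiv : ∀ {M A μ' : ℕ}, 0 < A → μ' < k → M + k = A * k + μ' → A = M / k + 1 := by
    intro M A μ' hA h1 h2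
    obtain ⟨x, rfl⟩ : ∃ x, A = x + 1 := ⟨A - 1, by omega⟩
    rw [add_mul] at h2
    have h3 : M = μ' + k * x := by rw [mul_comm k x]; omega
    rw [h3, Nat.add_mul_div_left _ _ hk, Nat.div_eq_of_lt h1, zero_add]
  refine ⟨p, hpS, hdiv hap hμk hm, hdiv hbp hνk hn, ?_⟩
  intro I J u v
  have hI2 : (I + 1) * k ≤ y.rows * k := Nat.mul_le_mul_right _ I.2
  have hJ2 : (J + 1) * k ≤ y.cols * k := Nat.mul_le_mul_right _ J.2
  rw [add_mul] at hI2 hJ2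
  obtain ⟨s1, s2⟩ := blk_off_uniq (k := k) (r := I * k + u + 1) (I := I + 1) u.2 (by ring)
  obtain ⟨s3, s4⟩ := blk_off_uniq (k := k) (r := J * k + v + 1) (I := J + 1) v.2 (by ring)
  have hu := u.2
  have hv := v.2
  have e := hlab (I * k + u + 1) (J * k + v + 1) (by omega) (by omega) (by omega) (by omega)
    (y.pix I J) (by
      rw [s1, s3, bpix_succ]
      unfold Picture.pget
      rw [dif_pos ⟨I.2, J.2⟩])
  rw [← bpix_succ, hp _ _ (by omega) (by omega) (by omega) (by omega), ← e]
  simp only [s2, s4]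

end Step2
section Final

variable {Sig Gam : Type}

/-- Encoding of a block. -/
def encB (k : ℕ) {D : Type} (φ : D → Fin (k - 2) → Fin (k - 1) → Bool)
    (e : (Fin k → Fin k → Option Sig) × D) (u v : ℕ) : Option Sig × Bool :=
  (if h : u < k ∧ v < k then e.1 ⟨u, h.1⟩ ⟨v, h.2⟩ else none,
    if u = 0 then true else if v = k - 1 then false else if u = 1 then true else
    if h : u - 2 < k - 2 ∧ v < k - 1 then φ e.2 ⟨u - 2, h.1⟩ ⟨v, h.2⟩ else false)

theorem encB_inj {k : ℕ} {D : Type} (φ : D → Fin (k - 2) → Fin (k - 1) → Bool)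
    (hφ : Function.Injective φ) (e e' : (Fin k → Fin k → Option Sig) × D)
    (h : ∀ u < k, ∀ v < k, encB k φ e u v = encB k φ e' u v) : e = e' := by
  apply Prod.ext
  · funext u v
    have := congrArg Prod.fst (h u u.2 v v.2)
    simpa [encB] using this
  · apply hφ
    funext u v
    have hu := u.2
    have hv := v.2
    have := congrArg Prod.snd (h (u + 2) (by omega) v (by omega))
    have h1 : (v : ℕ) ≠ k - 1 := by omega
    simpa [encB, h1] using this

theorem lab_pget {k : ℕ} (hk : 0 < k) {π : Gam → Sig}
    (φ : BlkD Gam k → Fin (k - 2) → Fin (k - 1) → Bool) {y : Picture (BlkT Sig Gam k)}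
    {p : Picture Gam} (h : IsLab k π y p) (i j : ℕ) (hi : i < y.rows * k) (hj : j < y.cols * k) :
    (Picture.map Prod.fst (blow k hk (encB k φ) y)).pget i j =
      some ((Picture.map π p).pget i j) := by
  unfold Picture.pget
  rw [dif_pos (show i < (Picture.map Prod.fst (blow k hk (encB k φ) y)).rows ∧
    j < (Picture.map Prod.fst (blow k hk (encB k φ) y)).cols from ⟨hi, hj⟩)]
  congr 1
  have h1 := h.2.2 ⟨i / k, Nat.div_lt_of_lt_mul (by rw [mul_comm]; exact hi)⟩
    ⟨j / k, Nat.div_lt_of_lt_mul (by rw [mul_comm]; exact hj)⟩ ⟨i % k, Nat.mod_lt _ hk⟩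
    ⟨j % k, Nat.mod_lt _ hk⟩
  simp only [Nat.div_add_mod'] at h1
  simp only [Picture.map, blow, encB, Nat.mod_lt _ hk, and_self, dite_true]
  rw [h1]
  unfold Picture.pget
  by_cases hc : i < p.rows ∧ j < p.cols
  · simp [hc]
  · simp [hc]

theorem padded_eq {k : ℕ} (hk : 0 < k) (π : Gam → Sig)
    (φ : BlkD Gam k → Fin (k - 2) → Fin (k - 1) → Bool)
    {S : Set (Picture Gam)} (hS : Loc 2 S ⊆ S) :
    padded k (Picture.map π '' S) =
      Picture.map Prod.fst '' (blow k hk (encB k φ) '' Loc 2 (blkOf k hk π '' S)) := by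
  ext q
  constructor
  · rintro ⟨_, ⟨p, hp, rfl⟩, h1, h2, h3, h4, ⟨a, ha⟩, ⟨b, hb⟩, h7⟩
    refine ⟨_, ⟨blkOf k hk π p, subset_Loc _ _ ⟨p, hp, rfl⟩, rfl⟩, ?_⟩
    have hdim : ∀ {M Q a : ℕ}, M < Q → Q ≤ M + k → Q = k * a → (M / k + 1) * k = Q := by
      intro M Q a h1 h2 h3
      have e : M / k + 1 = a := by
        apply le_antisymm
        · exact Nat.div_lt_of_lt_mul (by omega)
        · by_contra hh
          have d := Nat.div_add_mod' M k
          have d2 := Nat.mod_lt M hk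
          have : (M / k + 2) * k ≤ a * k := Nat.mul_le_mul_right _ (by omega)
          rw [add_mul, mul_comm a k] at this
          omega
      rw [e, h3, mul_comm]
    have hr : (p.rows / k + 1) * k = q.rows := hdim h1 h2 ha
    have hc : (p.cols / k + 1) * k = q.cols := hdim h3 h4 hb
    apply pic_ext
    · exact hr
    · exact hc
    · intro i j hi hj
      have hi' : i < (p.rows / k + 1) * k := hi
      have hj' : j < (p.cols / k + 1) * k := hj
      rw [h7 i j (by omega) (by omega)]
      exact lab_pget hk φ ⟨rfl, rfl, fun _ _ _ _ => rfl⟩ i j hi hj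
  · rintro ⟨_, ⟨y, hy, rfl⟩, rfl⟩
    obtain ⟨p, hp, hl⟩ := step2 hk π hS hy
    have er : (Picture.map Prod.fst (blow k hk (encB k φ) y)).rows = y.rows * k := rfl
    have ec : (Picture.map Prod.fst (blow k hk (encB k φ) y)).cols = y.cols * k := rfl
    have d1 := Nat.div_add_mod' p.rows k
    have d2 := Nat.mod_lt p.rows hk
    have d3 := Nat.div_add_mod' p.cols k
    have d4 := Nat.mod_lt p.cols hk
    have er' := er
    have ec' := ec
    rw [hl.1, add_mul] at er'
    rw [hl.2.1, add_mul] at ec'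
    have m1 : (Picture.map π p).rows = p.rows := rfl
    have m2 : (Picture.map π p).cols = p.cols := rfl
    refine ⟨_, ⟨p, hp, rfl⟩, by omega, by omega, by omega, by omega, ?_, ?_, ?_⟩
    · rw [er]; exact Dvd.intro_left _ rfl
    · rw [ec]; exact Dvd.intro_left _ rfl
    · intro i j hi hj
      exact lab_pget hk φ hl i j hi hj

theorem card_bound {n L k : ℕ} (hn : n + 1 ≤ 2 ^ L) (hk : k = 2 * L + 4) :
    k * k * ((n + 1) ^ k * (n + 1) ^ k) ≤ (2 ^ (k - 1)) ^ (k - 2) := by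
  have h1 : ∀ m : ℕ, (m + 4) * (m + 4) ≤ 2 ^ (m + 4) := by
    intro m
    induction m with
    | zero => norm_num
    | succ m ih => rw [show m + 1 + 4 = m + 4 + 1 by ring, pow_succ]; nlinarith
  have h2 : k * k ≤ 2 ^ k := by rw [hk]; exact h1 _
  have h3 : (n + 1) ^ k ≤ 2 ^ (L * k) := by
    rw [pow_mul]; exact Nat.pow_le_pow_left hn k
  calc k * k * ((n + 1) ^ k * (n + 1) ^ k) ≤ 2 ^ k * (2 ^ (L * k) * 2 ^ (L * k)) := by gcongr
    _ = 2 ^ (k + (L * k + L * k)) := by rw [pow_add, pow_add]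
    _ ≤ 2 ^ ((k - 1) * (k - 2)) := by
        apply Nat.pow_le_pow_right (by norm_num)
        subst hk
        rw [show 2 * L + 4 - 1 = 2 * L + 3 by omega, show 2 * L + 4 - 2 = 2 * L + 2 by omega]
        nlinarith
    _ = _ := by rw [pow_mul]

theorem paddedEMT_of [Fintype Sig] [Fintype Gam] (T : Set (BTile Gam 2)) (π : Gam → Sig) :
    PaddedEMT Sig (Picture.map π '' SLTLang 2 T) (2 * (Nat.log 2 (Fintype.card Gam) + 1) + 4) := by
  classical
  obtain ⟨k, hk⟩ : ∃ k, k = 2 * (Nat.log 2 (Fintype.card Gam) + 1) + 4 := ⟨_, rfl⟩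
  rw [← hk]
  have hk0 : 0 < k := by omega
  have hcard : Fintype.card (BlkD Gam k) ≤ Fintype.card (Fin (k - 2) → Fin (k - 1) → Bool) := by
    simp only [Fintype.card_prod, Fintype.card_fin, Fintype.card_fun, Fintype.card_option,
      Fintype.card_bool]
    exact card_bound (Nat.lt_pow_succ_log_self (by norm_num) _) hk
  obtain ⟨φ⟩ := Function.Embedding.nonempty_of_card_le hcard
  refine ⟨Option Sig × Bool, inferInstance, ?_, ?_⟩
  · simp only [Fintype.card_prod, Fintype.card_option, Fintype.card_bool]; ring
  · have hS := Loc_SLT 2 T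
    have hst := step1 (k := k) (by omega) hk0 (encB (Sig := Sig) k φ) Prod.snd
      (by intro b v _; simp [encB])
      (by
        intro b u hu _
        have : u ≠ 0 := by omega
        simp [encB, this])
      (by
        intro b v hv
        have : v ≠ k - 1 := by omega
        simp [encB, this])
      (encB_inj φ φ.injective)
      (Loc_Loc 2 (blkOf k hk0 π '' SLTLang 2 T))
    have hL := Loc_eq_SLT (2 * k)
      (blow k hk0 (encB (Sig := Sig) k φ) '' Loc 2 (blkOf k hk0 π '' SLTLang 2 T))
    rw [Set.Subset.antisymm hst (subset_Loc _ _)] at hL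
    exact ⟨_, Prod.fst, (padded_eq hk0 π φ hS).trans (congrArg _ hL)⟩

end Final

/-- Extended Medvedev theorem for padded languages: for every tiling
recognizable `R ⊆ Σ^{++}` there are `k ≥ 2`, an alphabet `Λ` with
`|Λ| = 2 + 2·|Σ|`, a `2k`-SLT language `L ⊆ Λ^{++}` and a projection
`ρ : Λ → Σ ∪ {$}` with `R^(k) = ρ(L)`; moreover there is an absolute
constant `c` such that if `R` is recognized by a tiling system with a local
alphabet of size `n ≥ 2`, then `k` can be chosen with `k ≤ c·log₂ n`. -/
theorem padded_extended_Medvedev :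
    (∀ (Sig : Type) (_ : Fintype Sig) (R : Set (Picture Sig)),
      TilingRecognizable R → ∃ k : ℕ, 2 ≤ k ∧ PaddedEMT Sig R k) ∧
    (∃ c : ℝ, 0 < c ∧
      ∀ (Sig : Type) (_ : Fintype Sig) (R : Set (Picture Sig))
        (Gam : Type) (_ : Fintype Gam) (T : Set (BTile Gam 2)) (π : Gam → Sig),
        2 ≤ Fintype.card Gam →
        R = Picture.map π '' SLTLang 2 T →
        ∃ k : ℕ, 2 ≤ k ∧ (k : ℝ) ≤ c * Real.logb 2 (Fintype.card Gam) ∧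
          PaddedEMT Sig R k) := by
  constructor
  · rintro Sig _ R ⟨Gam, hG, T, π, rfl⟩
    exact ⟨2 * (Nat.log 2 (Fintype.card Gam) + 1) + 4, by omega, paddedEMT_of T π⟩
  · refine ⟨8, by norm_num, ?_⟩
    rintro Sig _ R Gam hG T π hn rfl
    refine ⟨2 * (Nat.log 2 (Fintype.card Gam) + 1) + 4, by omega, ?_, paddedEMT_of T π⟩
    have h1 := Real.natLog_le_logb (Fintype.card Gam) 2
    have h2 : (1 : ℝ) ≤ Real.logb 2 (Fintype.card Gam) := by
      rw [Real.le_logb_iff_rpow_le (by norm_num) (by positivity)]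
      simpa using (by exact_mod_cast hn : (2 : ℝ) ≤ (Fintype.card Gam : ℝ))
    push_cast at h1 ⊢
    linarith
end

section
/- For every tiling recognizable picture language R ⊆ Σ^{++} there exist k ≥ 2 and a 2k-tiling system (Σ, Θ, T', π) with |Θ| = 2·|Σ| (alphabetic ratio 2) recognizing R, i.e., R = π(L(T')). Moreover there is an absolute constant c such that, if R is recognized by a tiling system with a local alphabet of size n ≥ 2, then k can be chosen with k ≤ c·log₂ n. -/
/-- `R` is recognized by some `2k`-tiling system whose local alphabet `Θ`
has cardinality `2·|Σ|`, i.e. with alphabetic ratio 2. -/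
def RatioTwoEMT (Sig : Type) [Fintype Sig] (R : Set (Picture Sig)) (k : ℕ) : Prop :=
  ∃ (Th : Type) (_ : Fintype Th),
    Fintype.card Th = 2 * Fintype.card Sig ∧
    ∃ (T' : Set (BTile Th (2 * k))) (π : Th → Sig),
      R = Picture.map π '' SLTLang (2 * k) T'

namespace EMT

/-! ### Generic facts on bordered pictures -/

theorem bpix_isSome {A : Type} (p : Picture A) (u v : ℕ) :
    (p.bpix u v).isSome ↔ (1 ≤ u ∧ u ≤ p.rows) ∧ (1 ≤ v ∧ v ≤ p.cols) := by
  unfold Picture.bpix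
  split_ifs with h
  · simp; omega
  · simp; omega

theorem bpix_map {A B : Type} (f : A → B) (p : Picture A) (u v : ℕ) :
    (p.map f).bpix u v = (p.bpix u v).map f := by
  unfold Picture.bpix
  by_cases h : 1 ≤ u ∧ u ≤ p.rows ∧ 1 ≤ v ∧ v ≤ p.cols
  · have h' : 1 ≤ u ∧ u ≤ (p.map f).rows ∧ 1 ≤ v ∧ v ≤ (p.map f).cols := h
    rw [dif_pos h, dif_pos h']; rfl
  · have h' : ¬ (1 ≤ u ∧ u ≤ (p.map f).rows ∧ 1 ≤ v ∧ v ≤ (p.map f).cols) := h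
    rw [dif_neg h, dif_neg h']; rfl

theorem ext_bpix {A : Type} (p q : Picture A) (hr : p.rows = q.rows) (hc : p.cols = q.cols)
    (h : ∀ u v, p.bpix u v = q.bpix u v) : p = q := by
  obtain ⟨m, n, hm, hn, f⟩ := p
  obtain ⟨m', n', hm', hn', f'⟩ := q
  simp only at hr hc
  subst hr; subst hc
  congr 1
  funext i j
  have h1 := h (i + 1) (j + 1)
  have hi := i.2
  have hj := j.2
  simp only [Picture.bpix] at h1
  rw [dif_pos (by omega), dif_pos (by omega)] at h1
  simpa using h1

theorem exists_picture {A : Type} (m n : ℕ) (hm : 0 < m) (hn : 0 < n) (F : ℕ → ℕ → Option A)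
    (hF : ∀ u v, (F u v).isSome ↔ (1 ≤ u ∧ u ≤ m) ∧ (1 ≤ v ∧ v ≤ n)) :
    ∃ p : Picture A, p.rows = m ∧ p.cols = n ∧ ∀ u v, p.bpix u v = F u v := by
  refine ⟨⟨m, n, hm, hn, fun i j => (F (i + 1) (j + 1)).get ((hF _ _).2 ?_)⟩, rfl, rfl, ?_⟩
  · have hi := i.2
    have hj := j.2
    omega
  · intro u v
    unfold Picture.bpix
    split_ifs with h
    · obtain ⟨u, rfl⟩ : ∃ u', u = u' + 1 := ⟨u - 1, by omega⟩
      obtain ⟨v, rfl⟩ : ∃ v', v = v' + 1 := ⟨v - 1, by omega⟩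
      simp
    · have := hF u v
      simp only at h
      symm
      rw [← Option.not_isSome_iff_eq_none, this]
      omega

/-! ### The bit field -/

/-- The bit attached to the pixel `(x,y)`: block corners are marked by a 2×2 square of ones,
otherwise ones are only allowed on odd diagonals; pixels on diagonals `1 mod 4` code the states
of the left column of the block, those on diagonals `3 mod 4` the states of the top row. -/
def bitf {G : Type} (code : Option G → ℕ → Bool) (l b : ℕ) (g : ℕ → ℕ → Option G)
    (x y : ℕ) : Bool :=
  if x % b ≤ 1 ∧ y % b ≤ 1 then true
  else if (x + y) % 2 = 0 then false
  else if (x + y) % 4 = 1 then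
    decide (4 ≤ y % b ∧ y % b < 4 * l + 4) && code (g x (y - y % b)) (y % b / 4 - 1)
  else
    decide (4 ≤ x % b ∧ x % b < 4 * l + 4) && code (g (x - x % b) y) (x % b / 4 - 1)

section bits

variable {G : Type} (code : Option G → ℕ → Bool) (l b : ℕ)

theorem mod_succ_cases (b x : ℕ) (hb : 2 ≤ b) :
    (x % b = b - 1 ∧ (x + 1) % b = 0) ∨ (x % b < b - 1 ∧ (x + 1) % b = x % b + 1) := by
  have h := Nat.mod_lt x (show b > 0 by omega)
  rw [Nat.add_mod, Nat.mod_eq_of_lt (show 1 < b by omega)]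
  by_cases h1 : x % b = b - 1
  · left
    refine ⟨h1, ?_⟩
    rw [h1, Nat.sub_add_cancel (by omega), Nat.mod_self]
  · right
    exact ⟨by omega, Nat.mod_eq_of_lt (by omega)⟩

theorem mod4 (hb : b = 4 * l + 8) (x : ℕ) : x % b % 4 = x % 4 :=
  Nat.mod_mod_of_dvd x ⟨l + 2, by omega⟩

theorem bitf_corner (_hb : b = 4 * l + 8) (g : ℕ → ℕ → Option G)
    (x y : ℕ) (hx : x % b ≤ 1) (hy : y % b ≤ 1) :
    bitf code l b g x y = true := by
  unfold bitf
  rw [if_pos ⟨hx, hy⟩]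

theorem bitf_even (_hb : b = 4 * l + 8) (g : ℕ → ℕ → Option G)
    (x y : ℕ) (h : bitf code l b g x y = true) (he : (x + y) % 2 = 0) :
    x % b ≤ 1 ∧ y % b ≤ 1 := by
  unfold bitf at h
  by_contra hc
  rw [if_neg hc, if_pos he] at h
  exact absurd h (by simp)

/-- Full corners are recognised by 2×2 squares of ones. -/
theorem corner_detect (hb : b = 4 * l + 8) (g : ℕ → ℕ → Option G)
    (x y : ℕ) (h00 : bitf code l b g x y = true)
    (h01 : bitf code l b g x (y + 1) = true) (h10 : bitf code l b g (x + 1) y = true)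
    (h11 : bitf code l b g (x + 1) (y + 1) = true) : x % b = 0 ∧ y % b = 0 := by
  have hx := mod_succ_cases b x (by omega)
  have hy := mod_succ_cases b y (by omega)
  rcases Nat.mod_two_eq_zero_or_one (x + y) with he | he
  · have h1 := bitf_even code l b hb g _ _ h00 he
    have h2 := bitf_even code l b hb g _ _ h11 (by omega)
    omega
  · have h1 := bitf_even code l b hb g _ _ h01 (by omega)
    have h2 := bitf_even code l b hb g _ _ h10 (by omega)
    have m1 := mod4 l b hb x
    have m2 := mod4 l b hb y
    omega

theorem corner_detect_row (hb : b = 4 * l + 8) (g : ℕ → ℕ → Option G)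
    (y : ℕ) (h00 : bitf code l b g 0 y = true)
    (h01 : bitf code l b g 0 (y + 1) = true) : y % b = 0 := by
  have hy := mod_succ_cases b y (by omega)
  have m2 := mod4 l b hb y
  have m3 := mod4 l b hb (y + 1)
  rcases Nat.mod_two_eq_zero_or_one y with he | he
  · have h1 := bitf_even code l b hb g _ _ h00 (by omega)
    omega
  · have h1 := bitf_even code l b hb g _ _ h01 (by omega)
    have h3 : y % b = b - 1 := by omega
    exfalso
    unfold bitf at h00
    rw [if_neg (by omega), if_neg (by omega), if_neg (by omega)] at h00
    simp at h00

theorem corner_detect_col (hb : b = 4 * l + 8) (g : ℕ → ℕ → Option G)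
    (x : ℕ) (h00 : bitf code l b g x 0 = true)
    (h01 : bitf code l b g (x + 1) 0 = true) : x % b = 0 := by
  have hy := mod_succ_cases b x (by omega)
  have m2 := mod4 l b hb x
  have m3 := mod4 l b hb (x + 1)
  rcases Nat.mod_two_eq_zero_or_one x with he | he
  · have h1 := bitf_even code l b hb g _ _ h00 (by omega)
    omega
  · have h1 := bitf_even code l b hb g _ _ h01 (by omega)
    have h3 : x % b = b - 1 := by omega
    exfalso
    unfold bitf at h00
    rw [if_neg (by omega), if_neg (by omega), if_neg (by omega)] at h00
    have : 4 * l + 4 ≤ x % b := by omega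
    simp at h00
    omega

theorem mod_add_of (b x a : ℕ) (hx : x % b = 0) (ha : a < b) : (x + a) % b = a := by
  rw [Nat.add_mod, hx, Nat.zero_add, Nat.mod_mod, Nat.mod_eq_of_lt ha]

theorem dec_col (hb : b = 4 * l + 8) (g : ℕ → ℕ → Option G)
    (x y e : ℕ) (hx : x % b = 0) (he : e < l) :
    bitf code l b g (x + (4 * (e + 1) + (3 + 3 * (y % b)) % 4)) y = code (g x y) e := by
  have m1 := mod4 l b hb x
  have m2 := mod4 l b hb y
  set a := 4 * (e + 1) + (3 + 3 * (y % b)) % 4 with ha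
  have h1 : (x + a) % b = a := mod_add_of b x a hx (by omega)
  unfold bitf
  rw [h1, if_neg (by omega), if_neg (by omega), if_neg (by omega)]
  rw [show x + a - a = x by omega, show a / 4 - 1 = e by omega]
  simp
  omega

theorem dec_row (hb : b = 4 * l + 8) (g : ℕ → ℕ → Option G)
    (x y e : ℕ) (hy : y % b = 0) (he : e < l) :
    bitf code l b g x (y + (4 * (e + 1) + (1 + 3 * (x % b)) % 4)) = code (g x y) e := by
  have m1 := mod4 l b hb x
  have m2 := mod4 l b hb y
  set a := 4 * (e + 1) + (1 + 3 * (x % b)) % 4 with ha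
  have h1 : (y + a) % b = a := mod_add_of b y a hy (by omega)
  unfold bitf
  rw [h1, if_neg (by omega), if_neg (by omega), if_pos (by omega)]
  rw [show y + a - a = y by omega, show a / 4 - 1 = e by omega]
  simp
  omega

theorem exists_shift (b x : ℕ) (hb : 0 < b) : ∃ a < b, (x + a) % b = 0 := by
  have h := Nat.mod_lt x hb
  by_cases h0 : x % b = 0
  · exact ⟨0, hb, h0⟩
  · refine ⟨b - x % b, by omega, ?_⟩
    have : x + (b - x % b) = b * (x / b + 1) := by
      have := Nat.div_add_mod x b
      rw [mul_add]; omega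
    rw [this, Nat.mul_mod_right]

theorem cancel_shift (b x y a : ℕ) (hx : (x + a) % b = 0) (hy : (y + a) % b = 0) :
    x % b = y % b := by
  have : x + a ≡ y + a [MOD b] := by unfold Nat.ModEq; rw [hx, hy]
  exact Nat.ModEq.add_right_cancel' a this

/-- Two windows with equal bits have the same phase. `none` side: the window touches the border. -/
theorem sync (hb : b = 4 * l + 8) (g1 g2 : ℕ → ℕ → Option G) (m1 n1 m2 n2 i1 j1 i2 j2 : ℕ)
    (hm1 : 0 < m1) (hm2 : 0 < m2) (hn1 : 0 < n1) (hn2 : 0 < n2)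
    (hm : ∀ a c, a < 2 * b + 1 → c < 2 * b + 1 →
      ((1 ≤ i1 + a ∧ i1 + a ≤ m1) ∧ (1 ≤ j1 + c ∧ j1 + c ≤ n1)) →
      ((1 ≤ i2 + a ∧ i2 + a ≤ m2) ∧ (1 ≤ j2 + c ∧ j2 + c ≤ n2)) →
      bitf code l b g1 (i1 + a - 1) (j1 + c - 1) = bitf code l b g2 (i2 + a - 1) (j2 + c - 1))
    (hr : (i1 = 0 ∧ i2 = 0) ∨ (1 ≤ i1 ∧ 1 ≤ i2 ∧ i1 + 2 * b ≤ m1 + 1 ∧ i2 + 2 * b ≤ m2 + 1))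
    (hc : (j1 = 0 ∧ j2 = 0) ∨ (1 ≤ j1 ∧ 1 ≤ j2 ∧ j1 + 2 * b ≤ n1 + 1 ∧ j2 + 2 * b ≤ n2 + 1)) :
    i1 % b = i2 % b ∧ j1 % b = j2 % b := by
  have key : ∀ x y : ℕ, 1 ≤ x → 1 ≤ y → (x - 1) % b = (y - 1) % b → x % b = y % b := by
    intro x y hx hy h
    have : x - 1 + 1 ≡ y - 1 + 1 [MOD b] := Nat.ModEq.add_right 1 h
    rwa [Nat.sub_add_cancel hx, Nat.sub_add_cancel hy] at this
  rcases hr with ⟨rfl, rfl⟩ | ⟨hi1, hi2, hr1, hr2⟩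
  · refine ⟨rfl, ?_⟩
    rcases hc with ⟨rfl, rfl⟩ | ⟨hj1, hj2, hc1, hc2⟩
    · rfl
    · obtain ⟨c, hcb, hc0⟩ := exists_shift b (j1 - 1) (by omega)
      have e0 := hm 1 c (by omega) (by omega) (by omega) (by omega)
      have e1 := hm 1 (c + 1) (by omega) (by omega) (by omega) (by omega)
      have s := mod_succ_cases b (j1 - 1 + c) (by omega)
      rw [show j1 + c - 1 = j1 - 1 + c by omega, show j2 + c - 1 = j2 - 1 + c by omega,
        bitf_corner code l b hb _ _ _ (by simp) (by omega)] at e0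
      rw [show j1 + (c + 1) - 1 = j1 - 1 + c + 1 by omega,
        show j2 + (c + 1) - 1 = j2 - 1 + c + 1 by omega,
        bitf_corner code l b hb _ _ _ (by simp) (by omega)] at e1
      have := corner_detect_row code l b hb g2 (j2 - 1 + c) e0.symm e1.symm
      exact key _ _ hj1 hj2 (cancel_shift b _ _ c hc0 this)
  · obtain ⟨a, hab, ha0⟩ := exists_shift b (i1 - 1) (by omega)
    have sa := mod_succ_cases b (i1 - 1 + a) (by omega)
    rcases hc with ⟨rfl, rfl⟩ | ⟨hj1, hj2, hc1, hc2⟩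
    · refine ⟨?_, rfl⟩
      have e0 := hm a 1 (by omega) (by omega) (by omega) (by omega)
      have e1 := hm (a + 1) 1 (by omega) (by omega) (by omega) (by omega)
      rw [show i1 + a - 1 = i1 - 1 + a by omega, show i2 + a - 1 = i2 - 1 + a by omega,
        bitf_corner code l b hb _ _ _ (by omega) (by simp)] at e0
      rw [show i1 + (a + 1) - 1 = i1 - 1 + a + 1 by omega,
        show i2 + (a + 1) - 1 = i2 - 1 + a + 1 by omega,
        bitf_corner code l b hb _ _ _ (by omega) (by simp)] at e1
      have := corner_detect_col code l b hb g2 (i2 - 1 + a) e0.symm e1.symm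
      exact key _ _ hi1 hi2 (cancel_shift b _ _ a ha0 this)
    · obtain ⟨c, hcb, hc0⟩ := exists_shift b (j1 - 1) (by omega)
      have sc := mod_succ_cases b (j1 - 1 + c) (by omega)
      have e00 := hm a c (by omega) (by omega) (by omega) (by omega)
      have e10 := hm (a + 1) c (by omega) (by omega) (by omega) (by omega)
      have e01 := hm a (c + 1) (by omega) (by omega) (by omega) (by omega)
      have e11 := hm (a + 1) (c + 1) (by omega) (by omega) (by omega) (by omega)
      rw [show i1 + a - 1 = i1 - 1 + a by omega, show i2 + a - 1 = i2 - 1 + a by omega] at e00 e01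
      rw [show i1 + (a + 1) - 1 = i1 - 1 + a + 1 by omega,
        show i2 + (a + 1) - 1 = i2 - 1 + a + 1 by omega] at e10 e11
      rw [show j1 + c - 1 = j1 - 1 + c by omega, show j2 + c - 1 = j2 - 1 + c by omega] at e00 e10
      rw [show j1 + (c + 1) - 1 = j1 - 1 + c + 1 by omega,
        show j2 + (c + 1) - 1 = j2 - 1 + c + 1 by omega] at e01 e11
      rw [bitf_corner code l b hb _ _ _ (by omega) (by omega)] at e00 e01 e10 e11
      have := corner_detect code l b hb g2 _ _ e00.symm e01.symm e10.symm e11.symm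
      exact ⟨key _ _ hi1 hi2 (cancel_shift b _ _ a ha0 this.1),
        key _ _ hj1 hj2 (cancel_shift b _ _ c hc0 this.2)⟩

end bits

/-! ### Windows -/

section win

variable {G S : Type} (code : Option G → ℕ → Bool) (l b K : ℕ) (π : G → S)

/-- Encoding of a picture over the local alphabet. -/
def enc (p : Picture G) : Picture (S × Bool) :=
  ⟨p.rows, p.cols, p.rows_pos, p.cols_pos, fun i j =>
    (π (p.pix i j), bitf code l b (fun x y => p.bpix (x + 1) (y + 1)) i j)⟩

theorem enc_bpix (p : Picture G) (u v : ℕ) :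
    (enc code l b π p).bpix u v = (p.bpix u v).map (fun s =>
      (π s, bitf code l b (fun x y => p.bpix (x + 1) (y + 1)) (u - 1) (v - 1))) := by
  conv_lhs => unfold Picture.bpix
  by_cases h : 1 ≤ u ∧ u ≤ p.rows ∧ 1 ≤ v ∧ v ≤ p.cols
  · have h' : 1 ≤ u ∧ u ≤ (enc code l b π p).rows ∧ 1 ≤ v ∧ v ≤ (enc code l b π p).cols := h
    rw [dif_pos h']
    have : p.bpix u v = some (p.pix ⟨u - 1, by omega⟩ ⟨v - 1, by omega⟩) := by
      unfold Picture.bpix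
      rw [dif_pos h]
    rw [this]; rfl
  · have h' : ¬ (1 ≤ u ∧ u ≤ (enc code l b π p).rows ∧ 1 ≤ v ∧ v ≤ (enc code l b π p).cols) := h
    rw [dif_neg h']
    have : p.bpix u v = none := by
      unfold Picture.bpix
      rw [dif_neg h]
    rw [this]; rfl

/-- The window of `q` at `(i,j)` equals the window of the encoding of `p` at `(I,J)`. -/
structure Win (q : Picture (S × Bool)) (i j : ℕ) (p : Picture G) (I J : ℕ) : Prop where
  hi : i + K ≤ max (q.rows + 2) K
  hj : j + K ≤ max (q.cols + 2) K
  hI : I + K ≤ max (p.rows + 2) K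
  hJ : J + K ≤ max (p.cols + 2) K
  hm : ∀ a c, a < K → c < K → q.bpix (i + a) (j + c) = (enc code l b π p).bpix (I + a) (J + c)

variable {code l b K π}

theorem Win.some_iff {q : Picture (S × Bool)} {i j : ℕ} {p : Picture G} {I J : ℕ}
    (w : Win code l b K π q i j p I J) {a c : ℕ} (ha : a < K) (hc : c < K) :
    ((1 ≤ i + a ∧ i + a ≤ q.rows) ∧ (1 ≤ j + c ∧ j + c ≤ q.cols)) ↔
    ((1 ≤ I + a ∧ I + a ≤ p.rows) ∧ (1 ≤ J + c ∧ J + c ≤ p.cols)) := by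
  rw [← bpix_isSome, w.hm a c ha hc, bpix_isSome]
  rfl

theorem Win.base (hK : 2 ≤ K) {q : Picture (S × Bool)} {i j : ℕ} {p : Picture G} {I J : ℕ}
    (w : Win code l b K π q i j p I J) : ∃ a c, a < K ∧ c < K ∧
    ((1 ≤ i + a ∧ i + a ≤ q.rows) ∧ (1 ≤ j + c ∧ j + c ≤ q.cols)) := by
  have h1 := w.hi
  have h2 := w.hj
  have h3 := q.rows_pos
  have h4 := q.cols_pos
  refine ⟨if i = 0 then 1 else 0, if j = 0 then 1 else 0, ?_⟩
  split_ifs <;> omega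

theorem Win.rows_iff (hK : 2 ≤ K) {q : Picture (S × Bool)} {i j : ℕ} {p : Picture G} {I J : ℕ}
    (w : Win code l b K π q i j p I J) {a : ℕ} (ha : a < K) :
    (1 ≤ i + a ∧ i + a ≤ q.rows) ↔ (1 ≤ I + a ∧ I + a ≤ p.rows) := by
  obtain ⟨a0, c0, ha0, hc0, h⟩ := w.base hK
  have h0 := (w.some_iff ha0 hc0).1 h
  have h1 := w.some_iff ha hc0
  tauto

theorem Win.cols_iff (hK : 2 ≤ K) {q : Picture (S × Bool)} {i j : ℕ} {p : Picture G} {I J : ℕ}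
    (w : Win code l b K π q i j p I J) {c : ℕ} (hc : c < K) :
    (1 ≤ j + c ∧ j + c ≤ q.cols) ↔ (1 ≤ J + c ∧ J + c ≤ p.cols) := by
  obtain ⟨a0, c0, ha0, hc0, h⟩ := w.base hK
  have h0 := (w.some_iff ha0 hc0).1 h
  have h1 := w.some_iff ha0 hc
  tauto

theorem Win.row_zero (hK : 2 ≤ K) {q : Picture (S × Bool)} {i j : ℕ} {p : Picture G} {I J : ℕ}
    (w : Win code l b K π q i j p I J) : i = 0 ↔ I = 0 := by
  have h := w.rows_iff hK (a := 0) (by omega)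
  have h1 := w.hi
  have h2 := w.hI
  omega

theorem Win.col_zero (hK : 2 ≤ K) {q : Picture (S × Bool)} {i j : ℕ} {p : Picture G} {I J : ℕ}
    (w : Win code l b K π q i j p I J) : j = 0 ↔ J = 0 := by
  have h := w.cols_iff hK (c := 0) (by omega)
  have h1 := w.hj
  have h2 := w.hJ
  omega

theorem Win.bit {q : Picture (S × Bool)} {i j : ℕ} {p : Picture G} {I J : ℕ}
    (w : Win code l b K π q i j p I J) {a c : ℕ} (ha : a < K) (hc : c < K)
    (h : (1 ≤ I + a ∧ I + a ≤ p.rows) ∧ (1 ≤ J + c ∧ J + c ≤ p.cols)) :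
    (q.bpix (i + a) (j + c)).map Prod.snd =
      some (bitf code l b (fun x y => p.bpix (x + 1) (y + 1)) (I + a - 1) (J + c - 1)) := by
  rw [w.hm a c ha hc, enc_bpix]
  obtain ⟨s, hs⟩ := Option.isSome_iff_exists.1 ((bpix_isSome p _ _).2 h)
  rw [hs]; rfl

/-- Overlapping windows have compatible phases. `s`, `t` are the shifts. -/
theorem Win.step (hb : b = 4 * l + 8) (hK : K = 2 * (b + 1)) {q : Picture (S × Bool)}
    {i j s t : ℕ} {p p' : Picture G} {I J I' J' : ℕ} (hs : s ≤ 1) (ht : t ≤ 1)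
    (w : Win code l b K π q i j p I J) (w' : Win code l b K π q (i + s) (j + t) p' I' J') :
    (I + s) % b = I' % b ∧ (J + t) % b = J' % b := by
  have r1 := w.row_zero (by omega)
  have r2 := w'.row_zero (by omega)
  have c1 := w.col_zero (by omega)
  have c2 := w'.col_zero (by omega)
  have a1 := w.hI
  have a2 := w.hJ
  have a3 := w'.hI
  have a4 := w'.hJ
  have a5 := w.hi
  have a6 := w.hj
  have a7 := w'.hi
  have a8 := w'.hj
  have b1 := w.rows_iff (by omega) (a := K - 2) (by omega)
  have b2 := w.cols_iff (by omega) (c := K - 2) (by omega)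
  refine sync code l b hb (fun x y => p.bpix (x + 1) (y + 1)) (fun x y => p'.bpix (x + 1) (y + 1))
    p.rows p.cols p'.rows p'.cols (I + s) (J + t) I' J' p.rows_pos p'.rows_pos p.cols_pos
    p'.cols_pos ?_ ?_ ?_
  · intro a c ha hc h1 h2
    have e1 := w.bit (a := s + a) (c := t + c) (by omega) (by omega) (by omega)
    have e2 := w'.bit (a := a) (c := c) (by omega) (by omega) h2
    rw [← add_assoc, ← add_assoc, e2, ← add_assoc, ← add_assoc] at e1
    exact (Option.some_injective _ e1).symm
  · by_cases h : I + s = 0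
    · left; omega
    · right; omega
  · by_cases h : J + t = 0
    · left; omega
    · right; omega

theorem phase (hb : b = 4 * l + 8) (hK : K = 2 * (b + 1)) {q : Picture (S × Bool)}
    (P : ℕ → ℕ → Picture G) (I J : ℕ → ℕ → ℕ)
    (hw : ∀ i j, i + K ≤ max (q.rows + 2) K → j + K ≤ max (q.cols + 2) K →
      Win code l b K π q i j (P i j) (I i j) (J i j)) :
    ∀ i j, i + K ≤ max (q.rows + 2) K → j + K ≤ max (q.cols + 2) K →
      I i j % b = i % b ∧ J i j % b = j % b := by
  intro i j
  induction j with
  | zero =>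
    intro hi hj
    have hJ : J i 0 = 0 := ((hw i 0 hi hj).col_zero (by omega)).1 rfl
    refine ⟨?_, by rw [hJ]⟩
    clear hJ
    induction i with
    | zero =>
      have hI : I 0 0 = 0 := ((hw 0 0 hi hj).row_zero (by omega)).1 rfl
      rw [hI]
    | succ i ih =>
      have h1 := ih (by omega)
      have h2 := (hw i 0 (by omega) hj).step hb hK (s := 1) (t := 0) (by omega) (by omega)
        (hw (i + 1) 0 hi hj)
      rw [← h2.1]
      exact Nat.ModEq.add_right 1 h1
  | succ j ih =>
    intro hi hj
    have h1 := ih hi (by omega)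
    have h2 := (hw i j hi (by omega)).step hb hK (s := 0) (t := 1) (by omega) (by omega)
      (hw i (j + 1) hi hj)
    refine ⟨?_, ?_⟩
    · rw [← h2.1]; exact h1.1
    · rw [← h2.2]; exact Nat.ModEq.add_right 1 h1.2

/-- Decoding: two windows containing the code of a cell on a horizontal line agree there. -/
theorem agree_row (hb : b = 4 * l + 8) (hK : K = 2 * (b + 1))
    (hcode : ∀ g h : G, (∀ e < l, code (some g) e = code (some h) e) → g = h)
    {q : Picture (S × Bool)} {i j i' j' : ℕ} {p p' : Picture G} {I J I' J' : ℕ}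
    (w : Win code l b K π q i j p I J) (w' : Win code l b K π q i' j' p' I' J')
    (ph : I % b = i % b ∧ J % b = j % b) (ph' : I' % b = i' % b ∧ J' % b = j' % b)
    (u a a' c c' : ℕ) (hu : u % b = 0) (ha : i + a = u + 1) (ha' : i' + a' = u + 1)
    (hub : u + b ≤ q.rows) (hab : a + b ≤ K) (hab' : a' + b ≤ K)
    (hc : c < K) (hc' : c' < K) (hcc : j + c = j' + c') :
    p.bpix (I + a) (J + c) = p'.bpix (I' + a') (J' + c') := by
  by_cases hcont : 1 ≤ j + c ∧ j + c ≤ q.cols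
  swap
  · have h1 := (w.cols_iff (by omega) hc).not.1 hcont
    have h2 := (w'.cols_iff (by omega) hc').not.1 (by rwa [hcc] at hcont)
    have h3 := (bpix_isSome p (I + a) (J + c)).not.2 (by tauto)
    have h4 := (bpix_isSome p' (I' + a') (J' + c')).not.2 (by tauto)
    rw [Option.not_isSome_iff_eq_none] at h3 h4
    rw [h3, h4]
  have hC := (w.cols_iff (by omega) hc).1 hcont
  have hC' := (w'.cols_iff (by omega) hc').1 (by rwa [hcc] at hcont)
  have hR : ∀ d < b, 1 ≤ I + (a + d) ∧ I + (a + d) ≤ p.rows := fun d hd =>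
    (w.rows_iff (by omega) (a := a + d) (by omega)).1 (by omega)
  have hR' : ∀ d < b, 1 ≤ I' + (a' + d) ∧ I' + (a' + d) ≤ p'.rows := fun d hd =>
    (w'.rows_iff (by omega) (a := a' + d) (by omega)).1 (by omega)
  have hR0 := hR 0 (by omega)
  have hR0' := hR' 0 (by omega)
  obtain ⟨s, hs⟩ := Option.isSome_iff_exists.1 ((bpix_isSome p (I + a) (J + c)).2 ⟨hR0, hC⟩)
  obtain ⟨s', hs'⟩ :=
    Option.isSome_iff_exists.1 ((bpix_isSome p' (I' + a') (J' + c')).2 ⟨hR0', hC'⟩)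
  have sub : ∀ x y z, 1 ≤ x + z → 1 ≤ y + z → x % b = y % b → (x + z - 1) % b = (y + z - 1) % b := by
    intro x y z hx hy h
    have h1 : x + z - 1 + 1 ≡ y + z - 1 + 1 [MOD b] := by
      rw [Nat.sub_add_cancel hx, Nat.sub_add_cancel hy]; exact Nat.ModEq.add_right z h
    exact Nat.ModEq.add_right_cancel' 1 h1
  have x1 : (I + a - 1) % b = 0 := by
    rw [sub I i a hR0.1 (by omega) ph.1, ha]; simpa using hu
  have x2 : (I' + a' - 1) % b = 0 := by
    rw [sub I' i' a' hR0'.1 (by omega) ph'.1, ha']; simpa using hu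
  have y1 : (J + c - 1) % b = (J' + c' - 1) % b := by
    rw [sub J j c hC.1 (by omega) ph.2, sub J' j' c' hC'.1 (by omega) ph'.2, hcc]
  rw [hs, hs']
  congr 1
  apply hcode
  intro e he
  have d1 := dec_col code l b hb (fun x y => p.bpix (x + 1) (y + 1)) (I + a - 1) (J + c - 1) e x1 he
  have d2 := dec_col code l b hb (fun x y => p'.bpix (x + 1) (y + 1)) (I' + a' - 1) (J' + c' - 1)
    e x2 he
  rw [← y1] at d2
  generalize hd : 4 * (e + 1) + (3 + 3 * ((J + c - 1) % b)) % 4 = d at d1 d2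
  have hdb : d < b := by omega
  have b1 := w.bit (a := a + d) (c := c) (by omega) hc ⟨hR d hdb, hC⟩
  have b2 := w'.bit (a := a' + d) (c := c') (by omega) hc' ⟨hR' d hdb, hC'⟩
  rw [show i' + (a' + d) = i + (a + d) by omega, ← hcc, b1] at b2
  rw [show I + (a + d) - 1 = I + a - 1 + d by omega,
    show I' + (a' + d) - 1 = I' + a' - 1 + d by omega, d1, d2] at b2
  have b3 := Option.some_injective _ b2
  simp only [Nat.sub_add_cancel hC.1, Nat.sub_add_cancel hC'.1] at b3
  rw [show I + a - 1 + 1 = I + a by omega, show I' + a' - 1 + 1 = I' + a' by omega, hs, hs'] at b3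
  exact b3

/-- Decoding: two windows containing the code of a cell on a vertical line agree there. -/
theorem agree_col (hb : b = 4 * l + 8) (hK : K = 2 * (b + 1))
    (hcode : ∀ g h : G, (∀ e < l, code (some g) e = code (some h) e) → g = h)
    {q : Picture (S × Bool)} {i j i' j' : ℕ} {p p' : Picture G} {I J I' J' : ℕ}
    (w : Win code l b K π q i j p I J) (w' : Win code l b K π q i' j' p' I' J')
    (ph : I % b = i % b ∧ J % b = j % b) (ph' : I' % b = i' % b ∧ J' % b = j' % b)
    (u a a' c c' : ℕ) (hu : u % b = 0) (hc : j + c = u + 1) (hc' : j' + c' = u + 1)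
    (hub : u + b ≤ q.cols) (hcb : c + b ≤ K) (hcb' : c' + b ≤ K)
    (ha : a < K) (ha' : a' < K) (haa : i + a = i' + a') :
    p.bpix (I + a) (J + c) = p'.bpix (I' + a') (J' + c') := by
  by_cases hcont : 1 ≤ i + a ∧ i + a ≤ q.rows
  swap
  · have h1 := (w.rows_iff (by omega) ha).not.1 hcont
    have h2 := (w'.rows_iff (by omega) ha').not.1 (by rwa [haa] at hcont)
    have h3 := (bpix_isSome p (I + a) (J + c)).not.2 (by tauto)
    have h4 := (bpix_isSome p' (I' + a') (J' + c')).not.2 (by tauto)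
    rw [Option.not_isSome_iff_eq_none] at h3 h4
    rw [h3, h4]
  have hR := (w.rows_iff (by omega) ha).1 hcont
  have hR' := (w'.rows_iff (by omega) ha').1 (by rwa [haa] at hcont)
  have hC : ∀ d < b, 1 ≤ J + (c + d) ∧ J + (c + d) ≤ p.cols := fun d hd =>
    (w.cols_iff (by omega) (c := c + d) (by omega)).1 (by omega)
  have hC' : ∀ d < b, 1 ≤ J' + (c' + d) ∧ J' + (c' + d) ≤ p'.cols := fun d hd =>
    (w'.cols_iff (by omega) (c := c' + d) (by omega)).1 (by omega)
  have hC0 := hC 0 (by omega)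
  have hC0' := hC' 0 (by omega)
  obtain ⟨s, hs⟩ := Option.isSome_iff_exists.1 ((bpix_isSome p (I + a) (J + c)).2 ⟨hR, hC0⟩)
  obtain ⟨s', hs'⟩ :=
    Option.isSome_iff_exists.1 ((bpix_isSome p' (I' + a') (J' + c')).2 ⟨hR', hC0'⟩)
  have sub : ∀ x y z, 1 ≤ x + z → 1 ≤ y + z → x % b = y % b → (x + z - 1) % b = (y + z - 1) % b := by
    intro x y z hx hy h
    have h1 : x + z - 1 + 1 ≡ y + z - 1 + 1 [MOD b] := by
      rw [Nat.sub_add_cancel hx, Nat.sub_add_cancel hy]; exact Nat.ModEq.add_right z h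
    exact Nat.ModEq.add_right_cancel' 1 h1
  have x1 : (J + c - 1) % b = 0 := by
    rw [sub J j c hC0.1 (by omega) ph.2, hc]; simpa using hu
  have x2 : (J' + c' - 1) % b = 0 := by
    rw [sub J' j' c' hC0'.1 (by omega) ph'.2, hc']; simpa using hu
  have y1 : (I + a - 1) % b = (I' + a' - 1) % b := by
    rw [sub I i a hR.1 (by omega) ph.1, sub I' i' a' hR'.1 (by omega) ph'.1, haa]
  rw [hs, hs']
  congr 1
  apply hcode
  intro e he
  have d1 := dec_row code l b hb (fun x y => p.bpix (x + 1) (y + 1)) (I + a - 1) (J + c - 1) e x1 he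
  have d2 := dec_row code l b hb (fun x y => p'.bpix (x + 1) (y + 1)) (I' + a' - 1) (J' + c' - 1)
    e x2 he
  rw [← y1] at d2
  generalize hd : 4 * (e + 1) + (1 + 3 * ((I + a - 1) % b)) % 4 = d at d1 d2
  have hdb : d < b := by omega
  have b1 := w.bit (a := a) (c := c + d) ha (by omega) ⟨hR, hC d hdb⟩
  have b2 := w'.bit (a := a') (c := c' + d) ha' (by omega) ⟨hR', hC' d hdb⟩
  rw [show j' + (c' + d) = j + (c + d) by omega, ← haa, b1] at b2
  rw [show J + (c + d) - 1 = J + c - 1 + d by omega,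
    show J' + (c' + d) - 1 = J' + c' - 1 + d by omega, d1, d2] at b2
  have b3 := Option.some_injective _ b2
  simp only [Nat.sub_add_cancel hR.1, Nat.sub_add_cancel hR'.1] at b3
  rw [show J + c - 1 + 1 = J + c by omega, show J' + c' - 1 + 1 = J' + c' by omega, hs, hs'] at b3
  exact b3

end win

/-! ### Choice of the window of a cell (one coordinate) -/

/-- Start of the window attached to the bordered coordinate `u` in a picture of length `m`. -/
def ws (b K m u : ℕ) : ℕ := min (min ((u - 1) / b) (m / b - 1) * b) (m + 2 - K)

section ws

variable (b K m u : ℕ)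

theorem ws_valid : ws b K m u + K ≤ max (m + 2) K := by
  unfold ws; omega

theorem ws_bounds (hb : 8 ≤ b) (hK : K = 2 * (b + 1)) (hu : u ≤ m + 1) :
    ws b K m u ≤ u ∧ u < ws b K m u + K ∧ (u ≤ m → u + 1 < ws b K m u + K) := by
  have h1 := Nat.div_add_mod (u - 1) b
  have h2 := Nat.mod_lt (u - 1) (show b > 0 by omega)
  have h3 := Nat.div_add_mod m b
  have h4 := Nat.mod_lt m (show b > 0 by omega)
  unfold ws
  rw [mul_comm] at h1 h3
  set A := (u - 1) / b
  set B := m / b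
  rcases le_total A (B - 1) with h | h
  · rw [min_eq_left h]; omega
  · rw [min_eq_right h]
    have h5 : (B - 1) * b ≤ A * b := Nat.mul_le_mul_right b h
    rcases Nat.eq_zero_or_pos B with h0 | h0
    · rw [h0] at h3 ⊢
      simp only [Nat.zero_sub, Nat.zero_mul] at *
      omega
    · obtain ⟨C, hC⟩ : ∃ C, B = C + 1 := ⟨B - 1, by omega⟩
      rw [hC, add_mul] at h3
      rw [hC] at h5 ⊢
      simp only [Nat.add_sub_cancel] at *
      omega

theorem ws_step (hb : 8 ≤ b) (hK : K = 2 * (b + 1)) (hu : u ≤ m) :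
    ws b K m (u + 1) = ws b K m u ∨
    (u % b = 0 ∧ u + b ≤ m ∧ u + b < ws b K m u + K ∧ u + b < ws b K m (u + 1) + K) := by
  rcases Nat.eq_zero_or_pos u with rfl | hpos
  · left; unfold ws; simp
  have h1 := Nat.div_add_mod (u - 1) b
  have h2 := Nat.mod_lt (u - 1) (show b > 0 by omega)
  have h3 := Nat.div_add_mod m b
  have h4 := Nat.mod_lt m (show b > 0 by omega)
  have h5 := mod_succ_cases b (u - 1) (by omega)
  have h6 := Nat.div_add_mod u b
  rw [Nat.sub_add_cancel hpos] at h5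
  unfold ws
  simp only [Nat.add_sub_cancel]
  rw [mul_comm] at h1 h3 h6
  set A := (u - 1) / b
  set B := m / b
  set D := u / b
  clear_value A B D
  rcases h5 with ⟨h5, h5'⟩ | ⟨h5, h5'⟩
  · have hD : D = A + 1 := by
      apply Nat.eq_of_mul_eq_mul_right (show 0 < b by omega)
      rw [add_mul]; omega
    by_cases h : D ≤ B - 1
    · right
      rw [min_eq_left h, min_eq_left (show A ≤ B - 1 by omega)]
      have h7 : D * b ≤ (B - 1) * b := Nat.mul_le_mul_right b h
      obtain ⟨C, hC⟩ : ∃ C, B = C + 1 := ⟨B - 1, by omega⟩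
      rw [hC, add_mul] at h3
      rw [hC] at h7
      simp only [Nat.add_sub_cancel] at h7
      rw [hD, add_mul] at *
      omega
    · left
      rw [min_eq_right (show B - 1 ≤ D by omega), min_eq_right (show B - 1 ≤ A by omega)]
  · left
    have hD : D = A := by
      apply Nat.eq_of_mul_eq_mul_right (show 0 < b by omega)
      omega
    rw [hD]

end ws

/-! ### The core construction -/

theorem core {G S : Type} (l b K : ℕ) (hb : b = 4 * l + 8) (hK : K = 2 * (b + 1))
    (code : Option G → ℕ → Bool)
    (hcode : ∀ g h : G, (∀ e < l, code (some g) e = code (some h) e) → g = h)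
    (T : Set (BTile G 2)) (π : G → S) (q : Picture (S × Bool))
    (hq : ∀ i j, i + K ≤ max (q.rows + 2) K → j + K ≤ max (q.cols + 2) K →
      ∃ p : Picture G, ∃ I J, p ∈ SLTLang 2 T ∧ Win code l b K π q i j p I J) :
    ∃ p ∈ SLTLang 2 T, Picture.map π p = Picture.map Prod.fst q := by
  obtain ⟨p0, -⟩ := hq 0 0 (by omega) (by omega)
  have hq' : ∀ i j, ∃ p : Picture G, ∃ I J, i + K ≤ max (q.rows + 2) K →
      j + K ≤ max (q.cols + 2) K → p ∈ SLTLang 2 T ∧ Win code l b K π q i j p I J := by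
    intro i j
    by_cases h : i + K ≤ max (q.rows + 2) K ∧ j + K ≤ max (q.cols + 2) K
    · obtain ⟨p, I, J, h1⟩ := hq i j h.1 h.2
      exact ⟨p, I, J, fun _ _ => h1⟩
    · exact ⟨p0, 0, 0, fun h1 h2 => absurd ⟨h1, h2⟩ h⟩
  choose P I J hP using hq'
  have hw := fun i j h1 h2 => (hP i j h1 h2).2
  have hph := phase hb hK P I J hw
  let wr : ℕ → ℕ := ws b K q.rows
  let wc : ℕ → ℕ := ws b K q.cols
  have hwr : ∀ u, wr u + K ≤ max (q.rows + 2) K := fun u => ws_valid b K q.rows u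
  have hwc : ∀ u, wc u + K ≤ max (q.cols + 2) K := fun u => ws_valid b K q.cols u
  have hbr : ∀ u, u ≤ q.rows + 1 → wr u ≤ u ∧ u < wr u + K ∧ (u ≤ q.rows → u + 1 < wr u + K) :=
    fun u hu => ws_bounds b K q.rows u (by omega) hK hu
  have hbc : ∀ u, u ≤ q.cols + 1 → wc u ≤ u ∧ u < wc u + K ∧ (u ≤ q.cols → u + 1 < wc u + K) :=
    fun u hu => ws_bounds b K q.cols u (by omega) hK hu
  have hsr : ∀ u, u ≤ q.rows → wr (u + 1) = wr u ∨ (u % b = 0 ∧ u + b ≤ q.rows ∧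
      u + b < wr u + K ∧ u + b < wr (u + 1) + K) :=
    fun u hu => ws_step b K q.rows u (by omega) hK hu
  have hsc : ∀ u, u ≤ q.cols → wc (u + 1) = wc u ∨ (u % b = 0 ∧ u + b ≤ q.cols ∧
      u + b < wc u + K ∧ u + b < wc (u + 1) + K) :=
    fun u hu => ws_step b K q.cols u (by omega) hK hu
  clear_value wr wc
  -- value at `(u,v)` according to the window at `(i,j)`
  let V : ℕ → ℕ → ℕ → ℕ → Option G := fun i j u v =>
    (P i j).bpix (I i j + (u - i)) (J i j + (v - j))
  let F : ℕ → ℕ → Option G := fun u v =>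
    if u ≤ q.rows + 1 ∧ v ≤ q.cols + 1 then V (wr u) (wc v) u v else none
  have W := fun u v => hw (wr u) (wc v) (hwr u) (hwc v)
  have PH := fun u v => hph (wr u) (wc v) (hwr u) (hwc v)
  have hVq : ∀ u v, u ≤ q.rows + 1 → v ≤ q.cols + 1 →
      (V (wr u) (wc v) u v).map π = (q.bpix u v).map Prod.fst := by
    intro u v hu hv
    have h1 := hbr u hu
    have h2 := hbc v hv
    have h3 := (W u v).hm (u - wr u) (v - wc v) (by omega) (by omega)
    rw [show wr u + (u - wr u) = u by omega, show wc v + (v - wc v) = v by omega, enc_bpix] at h3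
    rw [h3, Option.map_map]
    rfl
  have hFq : ∀ u v, (F u v).map π = (q.bpix u v).map Prod.fst := by
    intro u v
    by_cases h : u ≤ q.rows + 1 ∧ v ≤ q.cols + 1
    · simp only [F, if_pos h]
      exact hVq u v h.1 h.2
    · simp only [F, if_neg h]
      have h4 := (bpix_isSome q u v).not.2 (by omega)
      rw [Option.not_isSome_iff_eq_none] at h4
      rw [h4]; rfl
  have hF : ∀ u v, (F u v).isSome ↔ (1 ≤ u ∧ u ≤ q.rows) ∧ (1 ≤ v ∧ v ≤ q.cols) := by
    intro u v
    rw [← bpix_isSome, ← Option.isSome_map (f := π), hFq, Option.isSome_map]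
  obtain ⟨p, hpr, hpc, hpF⟩ := exists_picture q.rows q.cols q.rows_pos q.cols_pos F hF
  refine ⟨p, ?_, ?_⟩
  swap
  · apply ext_bpix
    · exact hpr
    · exact hpc
    · intro u v
      rw [bpix_map, bpix_map, hpF, hFq]
  -- local agreement
  have hloc : ∀ u v, u ≤ q.rows → v ≤ q.cols → ∀ s t, s ≤ 1 → t ≤ 1 →
      F (u + s) (v + t) = V (wr u) (wc v) (u + s) (v + t) := by
    intro u v hu hv s t hs ht
    have hFV : F (u + s) (v + t) = V (wr (u + s)) (wc (v + t)) (u + s) (v + t) := by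
      simp only [F]
      rw [if_pos (by omega)]
    rw [hFV]
    have r0 := hbr u (by omega)
    have c0 := hbc v (by omega)
    have r1 := hbr (u + s) (by omega)
    have c1 := hbc (v + t) (by omega)
    have hr : wr (u + s) = wr u ∨ (s = 1 ∧ u % b = 0 ∧ u + b ≤ q.rows ∧
      u + b < wr u + K ∧ u + b < wr (u + s) + K) := by
      rcases Nat.le_one_iff_eq_zero_or_eq_one.1 hs with rfl | rfl
      · left; rfl
      · rcases hsr u hu with h | h
        · left; exact h
        · right; exact ⟨rfl, h⟩
    have hc : wc (v + t) = wc v ∨ (t = 1 ∧ v % b = 0 ∧ v + b ≤ q.cols ∧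
      v + b < wc v + K ∧ v + b < wc (v + t) + K) := by
      rcases Nat.le_one_iff_eq_zero_or_eq_one.1 ht with rfl | rfl
      · left; rfl
      · rcases hsc v hv with h | h
        · left; exact h
        · right; exact ⟨rfl, h⟩
    rcases hr with hr | ⟨rfl, h1, h2, h3, h4⟩
    · rcases hc with hc | ⟨rfl, h1, h2, h3, h4⟩
      · rw [hr, hc]
      · exact agree_col hb hK hcode (W (u + s) (v + 1)) (W u v) (PH (u + s) (v + 1)) (PH u v)
          v _ _ _ _ h1 (by omega) (by omega) h2 (by omega) (by omega) (by omega) (by omega)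
          (by omega)
    · exact agree_row hb hK hcode (W (u + 1) (v + t)) (W u v) (PH (u + 1) (v + t)) (PH u v)
          u _ _ _ _ h1 (by omega) (by omega) h2 (by omega) (by omega) (by omega) (by omega)
          (by omega)
  rintro tl ⟨u, v, hu, hv, htl⟩
  simp only [borderRows, borderCols, hpr, hpc] at hu hv
  have hu' : u ≤ q.rows := by omega
  have hv' : v ≤ q.cols := by omega
  have r0 := hbr u (by omega)
  have c0 := hbc v (by omega)
  have w := W u v
  apply (hP (wr u) (wc v) (hwr u) (hwc v)).1
  refine ⟨I (wr u) (wc v) + (u - wr u), J (wr u) (wc v) + (v - wc v), ?_, ?_, ?_⟩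
  · simp only [borderRows]
    have h1 := w.rows_iff (by omega) (a := u - wr u) (by omega)
    have h2 := w.row_zero (by omega)
    omega
  · simp only [borderCols]
    have h1 := w.cols_iff (by omega) (c := v - wc v) (by omega)
    have h2 := w.col_zero (by omega)
    omega
  · intro s t
    have hs := s.2
    have ht := t.2
    rw [htl, hpF, hloc u v hu' hv' s t (by omega) (by omega)]
    simp only [V]
    congr 1 <;> omega

theorem ratioTwo {G S : Type} [Fintype S] (l : ℕ) (code : Option G → ℕ → Bool)
    (hcode : ∀ g h : G, (∀ e < l, code (some g) e = code (some h) e) → g = h)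
    (T : Set (BTile G 2)) (π : G → S) :
    RatioTwoEMT S (Picture.map π '' SLTLang 2 T) (4 * l + 9) := by
  refine ⟨S × Bool, inferInstance, ?_, ?_⟩
  · rw [Fintype.card_prod, Fintype.card_bool, mul_comm]
  refine ⟨{ t | ∃ p ∈ SLTLang 2 T, t ∈ tilesOf (2 * (4 * l + 9)) (enc code l (4 * l + 8) π p) },
    Prod.fst, ?_⟩
  ext r
  constructor
  · rintro ⟨p, hp, rfl⟩
    exact ⟨enc code l (4 * l + 8) π p, fun t ht => ⟨p, hp, ht⟩, rfl⟩
  · rintro ⟨q, hq, rfl⟩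
    refine core l (4 * l + 8) (2 * (4 * l + 9)) rfl rfl code hcode T π q ?_
    intro i j hi hj
    obtain ⟨p, hp, I, J, hI, hJ, h⟩ := hq
      (show (fun a c : Fin (2 * (4 * l + 9)) => q.bpix (i + (a : ℕ)) (j + (c : ℕ))) ∈ tilesOf (2 * (4 * l + 9)) q
        from ⟨i, j, hi, hj, fun a c => rfl⟩)
    exact ⟨p, I, J, hp, hi, hj, hI, hJ, fun a c ha hc => h ⟨a, ha⟩ ⟨c, hc⟩⟩

theorem exists_code (G : Type) [Fintype G] (l : ℕ) (hl : Fintype.card G ≤ 2 ^ l) :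
    ∃ code : Option G → ℕ → Bool,
      ∀ g h : G, (∀ e < l, code (some g) e = code (some h) e) → g = h := by
  classical
  refine ⟨fun o e => match o with
    | none => false
    | some g => (Fintype.equivFin G g).val.testBit e, ?_⟩
  intro g h H
  apply (Fintype.equivFin G).injective
  apply Fin.ext
  apply Nat.eq_of_testBit_eq
  intro e
  by_cases he : e < l
  · exact H e he
  · have hp : 2 ^ l ≤ 2 ^ e := Nat.pow_le_pow_right (by norm_num) (by omega)
    rw [Nat.testBit_lt_two_pow (lt_of_lt_of_le (Fintype.equivFin G g).2 (hl.trans hp)),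
      Nat.testBit_lt_two_pow (lt_of_lt_of_le (Fintype.equivFin G h).2 (hl.trans hp))]

end EMT

/-- Extended Medvedev theorem for picture languages: every tiling
recognizable `R ⊆ Σ^{++}` is recognized, for some `k ≥ 2`, by a `2k`-tiling
system with alphabetic ratio 2; moreover there is an absolute constant `c`
such that if `R` is recognized by a tiling system with a local alphabet of
size `n ≥ 2`, then `k` can be chosen with `k ≤ c·log₂ n`. -/
theorem extended_Medvedev_for_pictures :
    (∀ (Sig : Type) (_ : Fintype Sig) (R : Set (Picture Sig)),
      TilingRecognizable R → ∃ k : ℕ, 2 ≤ k ∧ RatioTwoEMT Sig R k) ∧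
    (∃ c : ℝ, 0 < c ∧
      ∀ (Sig : Type) (_ : Fintype Sig) (R : Set (Picture Sig))
        (Gam : Type) (_ : Fintype Gam) (T : Set (BTile Gam 2)) (π : Gam → Sig),
        2 ≤ Fintype.card Gam →
        R = Picture.map π '' SLTLang 2 T →
        ∃ k : ℕ, 2 ≤ k ∧ (k : ℝ) ≤ c * Real.logb 2 (Fintype.card Gam) ∧
          RatioTwoEMT Sig R k) := by
  constructor
  · intro Sig _ R ⟨Gam, _, T, π, hR⟩
    obtain ⟨code, hcode⟩ := EMT.exists_code Gam (Fintype.card Gam) Nat.lt_two_pow_self.le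
    exact ⟨_, by omega, hR ▸ EMT.ratioTwo (Fintype.card Gam) code hcode T π⟩
  · refine ⟨17, by norm_num, ?_⟩
    intro Sig _ R Gam _ T π hn hR
    obtain ⟨code, hcode⟩ := EMT.exists_code Gam (Nat.log 2 (Fintype.card Gam) + 1)
      (Nat.lt_pow_succ_log_self (by norm_num) _).le
    refine ⟨_, by omega, ?_, hR ▸ EMT.ratioTwo _ code hcode T π⟩
    have h1 : ((Nat.log 2 (Fintype.card Gam) : ℕ) : ℝ) ≤ Real.logb 2 (Fintype.card Gam) :=
      Real.natLog_le_logb _ _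
    have h2 : 1 ≤ Nat.log 2 (Fintype.card Gam) := Nat.log_pos (by norm_num) hn
    have h3 : (1 : ℝ) ≤ ((Nat.log 2 (Fintype.card Gam) : ℕ) : ℝ) := by exact_mod_cast h2
    push_cast
    linarith
end
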